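/- Let f be a multicritical circle map with irrational rotation number and chosen critical point c_0, and let P*_n(c_0) be the auxiliary partition of the circle consisting of all images f^j(Δ_{k_i}) and f^j(G_i) (0 ≤ i ≤ r, 0 ≤ j ≤ q_{n+1}−1), all intervals f^j(I_{n+2}(c_0)) (0 ≤ j ≤ q_{n+1}−1), and all short atoms f^ℓ(I_{n+1}(c_0)) (0 ≤ ℓ ≤ q_n−1). Then any two consecutive atoms of P*_n(c_0) are comparable: there is a constant K > 1 depending only on f such that any two atoms of P*_n(c_0) sharing an endpoint have lengths within a factor K of each other. -/

import Mathlib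

open Set Filter MeasureTheory

noncomputable section

/-- The Schwarzian derivative `Sf = (f''/f')' - (1/2) (f''/f')^2`. -/
def schwarzianDeriv (f : ℝ → ℝ) (x : ℝ) : ℝ :=
  deriv (fun y => deriv (deriv f) y / deriv f y) x
    - (1 / 2) * (deriv (deriv f) x / deriv f x) ^ 2

/-- A multicritical circle map, described through its lift `F : ℝ → ℝ` to the real line.
It is an orientation-preserving `C^3` circle homeomorphism with finitely many critical
points `c 0, …, c (N-1)`, each of non-flat power-law type: near `c i` the derivative is
pinched between two multiples of `|x - c i| ^ (s i - 1)` with `s i > 1`, the Schwarzian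
derivative is negative on a punctured neighborhood of each critical point, and
`log (F')` has bounded variation (bounded by `v`) off the critical neighborhoods. -/
structure MCM where
  /-- the lift of the circle map -/
  F : ℝ → ℝ
  smooth : ContDiff ℝ 3 F
  mono : StrictMono F
  deg1 : ∀ x, F (x + 1) = F x + 1
  /-- number of critical points -/
  N : ℕ
  N_pos : 0 < N
  /-- the critical points (one representative in `[0,1)` for each) -/
  c : Fin N → ℝ
  c_mem : ∀ i, c i ∈ Set.Ico (0 : ℝ) 1
  c_inj : Function.Injective c
  isCrit : ∀ i, deriv F (c i) = 0
  critOnly : ∀ x, deriv F x = 0 → ∃ (i : Fin N) (k : ℤ), x = c i + (k : ℝ)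
  /-- neighborhoods of the critical points -/
  W : Fin N → Set ℝ
  W_open : ∀ i, IsOpen (W i)
  c_mem_W : ∀ i, c i ∈ W i
  /-- the criticalities (power-law exponents) -/
  s : Fin N → ℝ
  s_gt_one : ∀ i, 1 < s i
  al : Fin N → ℝ
  be : Fin N → ℝ
  al_pos : ∀ i, 0 < al i
  al_lt_be : ∀ i, al i < be i
  powerLaw : ∀ i, ∀ x ∈ W i, x ≠ c i →
    al i * |x - c i| ^ (s i - 1) < deriv F x ∧
      deriv F x < be i * |x - c i| ^ (s i - 1)
  negSchwarzian : ∀ i, ∀ x ∈ W i, x ≠ c i → schwarzianDeriv F x < 0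
  /-- bound for the variation of `log DF` off the critical neighborhoods -/
  v : ℝ
  v_pos : 0 < v
  logDF_var : eVariationOn (fun x => Real.log (deriv F x))
      (Set.Icc 0 1 \ ⋃ (i) (k : ℤ), (fun y => y + (k : ℝ)) '' W i) ≤ ENNReal.ofReal v

/-- The circle map with lift `F` has rotation number `ρ`. -/
def HasRotationNumber (F : ℝ → ℝ) (ρ : ℝ) : Prop :=
  Tendsto (fun n : ℕ => F^[n] 0 / n) atTop (nhds ρ)

/-- The Gauss map `x ↦ {1/x}`. -/
def gaussMap (x : ℝ) : ℝ := Int.fract x⁻¹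

/-- Partial quotients `a_n` of the continued fraction expansion of `ρ ∈ (0,1)`. -/
def cfDigit (ρ : ℝ) (n : ℕ) : ℕ := (⌊(gaussMap^[n] ρ)⁻¹⌋).toNat

/-- Return times: the denominators `q_n` of the convergents of `ρ`,
`q_0 = 1`, `q_1 = a_0`, `q_{n+1} = a_n q_n + q_{n-1}`. -/
def qDen (ρ : ℝ) : ℕ → ℕ
  | 0 => 1
  | 1 => cfDigit ρ 0
  | n + 2 => cfDigit ρ (n + 1) * qDen ρ (n + 1) + qDen ρ n

/-- Numerators `p_n` of the convergents of `ρ`: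
`p_0 = 0`, `p_1 = 1`, `p_{n+1} = a_n p_n + p_{n-1}`. -/
def pNum (ρ : ℝ) : ℕ → ℕ
  | 0 => 0
  | 1 => 1
  | n + 2 => cfDigit ρ (n + 1) * pNum ρ (n + 1) + pNum ρ n

/-- The lift of the atom `I_ℓ^j(x) = f^j(I_ℓ(x))`, where `I_ℓ(x)` is the interval with
endpoints `x` and `f^{q_ℓ}(x)`; the lift of `f^{q_ℓ}(x)` adjacent to `x` is
`F^[q_ℓ] x - p_ℓ`. -/
def atomSet (F : ℝ → ℝ) (ρ x : ℝ) (ℓ j : ℕ) : Set ℝ :=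
  Set.uIcc (F^[j] x) (F^[j + qDen ρ ℓ] x - (pNum ρ ℓ : ℝ))

/-- The length of the atom `I_ℓ^j(x)`. -/
def atomLen (F : ℝ → ℝ) (ρ x : ℝ) (ℓ j : ℕ) : ℝ :=
  |F^[j + qDen ρ ℓ] x - (pNum ρ ℓ : ℝ) - F^[j] x|

/-- The two endpoints (as lifts) of the atom `I_ℓ^j(x)`. -/
def atomEnds (F : ℝ → ℝ) (ρ x : ℝ) (ℓ j : ℕ) : Set ℝ :=
  {F^[j] x, F^[j + qDen ρ ℓ] x - (pNum ρ ℓ : ℝ)}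

/-- `(ℓ, j)` indexes an atom of the `n`-th dynamical partition
`P_n(x) = {I_n^i(x) : i < q_{n+1}} ∪ {I_{n+1}^j(x) : j < q_n}`. -/
def IsAtomIdx (ρ : ℝ) (n ℓ j : ℕ) : Prop :=
  (ℓ = n ∧ j < qDen ρ (n + 1)) ∨ (ℓ = n + 1 ∧ j < qDen ρ n)

/-- Two distinct atoms are adjacent when they share an endpoint on the circle,
i.e. when some endpoints of their lifts differ by an integer. -/
def AdjacentAtoms (F : ℝ → ℝ) (ρ x : ℝ) (ℓ₁ j₁ ℓ₂ j₂ : ℕ) : Prop :=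
  (ℓ₁, j₁) ≠ (ℓ₂, j₂) ∧
    ∃ u ∈ atomEnds F ρ x ℓ₁ j₁, ∃ w ∈ atomEnds F ρ x ℓ₂ j₂, ∃ k : ℤ, w = u + (k : ℝ)

/-- `k` is a *critical time* at level `n`: `k < a_{n+1}` and the atom
`Δ_k = f^{q_n + k q_{n+1}}(I_{n+1}(c₀))` contains a critical point of `f^{q_{n+1}}`. -/
def CritTime (f : MCM) (ρ : ℝ) (i₀ : Fin f.N) (n k : ℕ) : Prop :=
  k < cfDigit ρ (n + 1) ∧
    ∃ x ∈ atomSet f.F ρ (f.c i₀) (n + 1) (qDen ρ n + k * qDen ρ (n + 1)),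
      deriv (f.F^[qDen ρ (n + 1)]) x = 0

/-- `(i, j)` bounds a bridge: `i` is a critical time (or the conventional time `k₀ = 0`),
there is no critical time strictly between `i` and `j`, and `j` is either the next
critical time or the final index `a_{n+1}`. The corresponding bridge is
`G = ⋃_{k=i+1}^{j-1} Δ_k`. -/
def IsBridgePair (f : MCM) (ρ : ℝ) (i₀ : Fin f.N) (n i j : ℕ) : Prop :=
  (CritTime f ρ i₀ n i ∨ i = 0) ∧ i < j ∧
    (∀ k, i < k → k < j → ¬CritTime f ρ i₀ n k) ∧
    (CritTime f ρ i₀ n j ∨ j = cfDigit ρ (n + 1))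

/-- The length of the union `⋃_{k=lo}^{hi-1} Δ_k` of consecutive atoms
`Δ_k = f^{q_n + k q_{n+1}}(I_{n+1}(c₀))`. -/
def bridgeLen (f : MCM) (ρ : ℝ) (i₀ : Fin f.N) (n lo hi : ℕ) : ℝ :=
  ∑ k ∈ Finset.Ico lo hi, atomLen f.F ρ (f.c i₀) (n + 1) (qDen ρ n + k * qDen ρ (n + 1))

/-- Endpoint pairs (on lifts) of the atoms of the auxiliary partition `P*_n(c₀)`:
images `f^{jj}(Δ_{k_i})` of the critical spots, images `f^{jj}(G_i)` of the bridges
(for `0 ≤ jj ≤ q_{n+1} - 1`), the intervals `f^{jj}(I_{n+2}(c₀))`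
(`0 ≤ jj ≤ q_{n+1} - 1`), and the short atoms `f^ℓ(I_{n+1}(c₀))` (`0 ≤ ℓ ≤ q_n - 1`). -/
def PStarAtomEnds (f : MCM) (ρ : ℝ) (i₀ : Fin f.N) (n : ℕ) (e : ℝ × ℝ) : Prop :=
  (∃ i jj : ℕ, (CritTime f ρ i₀ n i ∨ i = 0) ∧ jj < qDen ρ (n + 1) ∧
      e = (f.F^[jj + qDen ρ n + i * qDen ρ (n + 1)] (f.c i₀),
           f.F^[jj + qDen ρ n + (i + 1) * qDen ρ (n + 1)] (f.c i₀) -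
             (pNum ρ (n + 1) : ℝ))) ∨
  (∃ i j jj : ℕ, IsBridgePair f ρ i₀ n i j ∧ i + 1 < j ∧ jj < qDen ρ (n + 1) ∧
      e = (f.F^[jj + qDen ρ n + (i + 1) * qDen ρ (n + 1)] (f.c i₀),
           f.F^[jj + qDen ρ n + j * qDen ρ (n + 1)] (f.c i₀) -
             (((j - 1 - i) * pNum ρ (n + 1) : ℕ) : ℝ))) ∨
  (∃ jj : ℕ, jj < qDen ρ (n + 1) ∧
      e = (f.F^[jj] (f.c i₀), f.F^[jj + qDen ρ (n + 2)] (f.c i₀) - (pNum ρ (n + 2) : ℝ))) ∨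
  (∃ l : ℕ, l < qDen ρ n ∧
      e = (f.F^[l] (f.c i₀), f.F^[l + qDen ρ (n + 1)] (f.c i₀) - (pNum ρ (n + 1) : ℝ)))

/-! ## Part 1: continued fractions and rotation number -/

/-- signed distances -/
def theta (ρ : ℝ) (n : ℕ) : ℝ := (qDen ρ n : ℝ) * ρ - (pNum ρ n : ℝ)

theorem gauss_mem (ρ : ℝ) (hirr : Irrational ρ) (hmem : ρ ∈ Set.Ioo (0 : ℝ) 1) (n : ℕ) :
    Irrational (gaussMap^[n] ρ) ∧ gaussMap^[n] ρ ∈ Set.Ioo (0 : ℝ) 1 := by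
  induction n with
  | zero => exact ⟨hirr, hmem⟩
  | succ n ih =>
    rw [Function.iterate_succ_apply']
    obtain ⟨h1, h2⟩ := ih
    set y := gaussMap^[n] ρ
    have h3 : Irrational (gaussMap y) := by
      unfold gaussMap Int.fract
      exact (irrational_inv_iff.mpr h1).sub_intCast _
    refine ⟨h3, ?_, Int.fract_lt_one _⟩
    rcases (Int.fract_nonneg y⁻¹).lt_or_eq with h | h
    · exact h
    · exfalso
      apply h3.ne_zero
      exact h.symm

theorem gauss_digit (ρ : ℝ) (hirr : Irrational ρ) (hmem : ρ ∈ Set.Ioo (0 : ℝ) 1) (n : ℕ) :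
    (gaussMap^[n] ρ)⁻¹ = (cfDigit ρ n : ℝ) + gaussMap^[n+1] ρ ∧ 1 ≤ cfDigit ρ n := by
  obtain ⟨h1, h2⟩ := gauss_mem ρ hirr hmem n
  rw [Function.iterate_succ_apply']
  unfold cfDigit
  set y := gaussMap^[n] ρ
  have hy : 1 ≤ y⁻¹ := (one_le_inv₀ h2.1).mpr h2.2.le
  have hf : 1 ≤ ⌊y⁻¹⌋ := Int.le_floor.mpr (by exact_mod_cast hy)
  have hc : ((⌊y⁻¹⌋.toNat : ℕ) : ℝ) = (⌊y⁻¹⌋ : ℝ) := by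
    have : ((⌊y⁻¹⌋.toNat : ℕ) : ℤ) = ⌊y⁻¹⌋ := Int.toNat_of_nonneg (by omega)
    exact_mod_cast this
  refine ⟨?_, by omega⟩
  rw [hc]
  unfold gaussMap
  exact (Int.floor_add_fract _).symm

theorem theta_succ (ρ : ℝ) (hirr : Irrational ρ) (hmem : ρ ∈ Set.Ioo (0 : ℝ) 1) (n : ℕ) :
    theta ρ (n+1) = - gaussMap^[n+1] ρ * theta ρ n := by
  induction n with
  | zero =>
    have h := (gauss_digit ρ hirr hmem 0).1
    have hρ : ρ ≠ 0 := hmem.1.ne'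
    simp only [theta, qDen, pNum, Function.iterate_zero, id] at *
    push_cast
    have : gaussMap^[0+1] ρ = ρ⁻¹ - cfDigit ρ 0 := by linarith
    rw [this]
    field_simp
    ring
  | succ n ih =>
    have h := (gauss_digit ρ hirr hmem (n+1)).1
    have hm := (gauss_mem ρ hirr hmem (n+1)).2.1.ne'
    have e : theta ρ (n+1+1) = cfDigit ρ (n+1) * theta ρ (n+1) + theta ρ n := by
      simp only [theta, qDen, pNum]; push_cast; ring
    have : gaussMap^[n+1+1] ρ = (gaussMap^[n+1] ρ)⁻¹ - cfDigit ρ (n+1) := by linarith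
    rw [e, this, ih]
    field_simp
    ring

theorem theta_sign (ρ : ℝ) (hirr : Irrational ρ) (hmem : ρ ∈ Set.Ioo (0 : ℝ) 1) (n : ℕ) :
    0 < (-1)^n * theta ρ n ∧ (-1)^n * theta ρ n < 1 := by
  induction n with
  | zero => simpa [theta, qDen, pNum] using hmem
  | succ n ih =>
    rw [theta_succ ρ hirr hmem n]
    have h := (gauss_mem ρ hirr hmem (n+1)).2
    have e : (-1)^(n+1) * (- gaussMap^[n+1] ρ * theta ρ n)
        = gaussMap^[n+1] ρ * ((-1)^n * theta ρ n) := by ring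
    rw [e]
    refine ⟨mul_pos h.1 ih.1, ?_⟩
    nlinarith [h.1, h.2, ih.1, ih.2]

/-- the opposite-sign comparison: `θ_n` dominates `θ_{n+1}`. -/
theorem theta_dom (ρ : ℝ) (hirr : Irrational ρ) (hmem : ρ ∈ Set.Ioo (0 : ℝ) 1) (n : ℕ) :
    0 < (-1)^n * (theta ρ n + theta ρ (n+1)) := by
  rw [theta_succ ρ hirr hmem n]
  have h := (gauss_mem ρ hirr hmem (n+1)).2
  have h2 := theta_sign ρ hirr hmem n
  have e : (-1)^n * (theta ρ n + - gaussMap^[n+1] ρ * theta ρ n)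
      = (1 - gaussMap^[n+1] ρ) * ((-1)^n * theta ρ n) := by ring
  rw [e]
  exact mul_pos (by linarith [h.2]) h2.1

theorem qDen_pos (ρ : ℝ) (hirr : Irrational ρ) (hmem : ρ ∈ Set.Ioo (0 : ℝ) 1) (n : ℕ) :
    0 < qDen ρ n ∧ qDen ρ n ≤ qDen ρ (n+1) := by
  induction n with
  | zero => exact ⟨by simp [qDen], by simpa [qDen] using (gauss_digit ρ hirr hmem 0).2⟩
  | succ n ih =>
    refine ⟨by omega, ?_⟩
    have h := (gauss_digit ρ hirr hmem (n+1)).2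
    show qDen ρ (n+1) ≤ cfDigit ρ (n + 1) * qDen ρ (n + 1) + qDen ρ n
    nlinarith

theorem qp_det (ρ : ℝ) (n : ℕ) :
    (qDen ρ n : ℤ) * pNum ρ (n+1) - qDen ρ (n+1) * pNum ρ n = (-1)^n := by
  induction n with
  | zero => simp [qDen, pNum]
  | succ n ih =>
    simp only [qDen, pNum] at *
    push_cast
    rw [pow_succ, ← ih]
    ring

theorem best_approx (ρ : ℝ) (hirr : Irrational ρ) (hmem : ρ ∈ Set.Ioo (0 : ℝ) 1) (n k : ℕ)
    (hk : 0 < k) (hk2 : k < qDen ρ (n+1)) (p : ℤ) :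
    (-1)^n * theta ρ n ≤ |(k : ℝ) * ρ + p| := by
  have hdet := qp_det ρ n
  have hq := qDen_pos ρ hirr hmem n
  have hs := theta_sign ρ hirr hmem n
  have hs' := theta_sign ρ hirr hmem (n+1)
  obtain ⟨e, he, hee⟩ : ∃ e : ℤ, (-1)^n = e ∧ e * e = 1 :=
    ⟨(-1)^n, rfl, by rw [← pow_add, ← two_mul]; simp⟩
  have her : ((-1:ℝ))^n = (e : ℝ) := by rw [← he]; push_cast; rfl
  rw [he] at hdet
  rw [pow_succ, her] at hs'
  rw [her] at hs ⊢
  -- coefficients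
  set Q := (qDen ρ n : ℤ) with hQ
  set Q' := (qDen ρ (n+1) : ℤ) with hQ'
  set P := (pNum ρ n : ℤ) with hP
  set P' := (pNum ρ (n+1) : ℤ) with hP'
  obtain ⟨u, hu⟩ : ∃ u : ℤ, u = e * (k * P' + p * Q') := ⟨_, rfl⟩
  obtain ⟨v, hv⟩ : ∃ v : ℤ, v = - e * (k * P + p * Q) := ⟨_, rfl⟩
  have hk' : u * Q + v * Q' = k := by
    rw [hu, hv]; linear_combination (e * k) * hdet + (k : ℤ) * hee
  have hp' : u * P + v * P' = - p := by
    rw [hu, hv]; linear_combination (- e * p) * hdet - p * hee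
  have hQ0 : 0 < Q := by rw [hQ]; exact_mod_cast hq.1
  have hQQ : Q ≤ Q' := by rw [hQ, hQ']; exact_mod_cast hq.2
  have hkQ : (k : ℤ) < Q' := by rw [hQ']; exact_mod_cast hk2
  have hk0 : (0:ℤ) < k := by exact_mod_cast hk
  have hval : (k : ℝ) * ρ + p = u * theta ρ n + v * theta ρ (n+1) := by
    have h1 : (u : ℝ) * Q + v * Q' = k := by exact_mod_cast hk'
    have h2 : (u : ℝ) * P + v * P' = - p := by exact_mod_cast hp'
    have e1 : (Q : ℝ) = qDen ρ n := by simp [hQ]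
    have e2 : (Q' : ℝ) = qDen ρ (n+1) := by simp [hQ']
    have e3 : (P : ℝ) = pNum ρ n := by simp [hP]
    have e4 : (P' : ℝ) = pNum ρ (n+1) := by simp [hP']
    rw [e1, e2] at h1
    rw [e3, e4] at h2
    unfold theta
    linear_combination (-ρ) * h1 + h2
  have hsame : (1 ≤ u ∧ v ≤ 0) ∨ (u ≤ -1 ∧ 0 ≤ v) := by
    rcases lt_trichotomy v 0 with h | h | h
    · left; refine ⟨?_, h.le⟩; by_contra hh; push Not at hh; nlinarith
    · subst h
      left; refine ⟨?_, le_refl _⟩; by_contra hh; push Not at hh; nlinarith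
    · right; refine ⟨?_, h.le⟩; by_contra hh; push Not at hh; nlinarith
  rw [hval]
  have habs : |(u:ℝ) * theta ρ n + v * theta ρ (n+1)|
      = |(e:ℝ) * (u * theta ρ n + v * theta ρ (n+1))| := by
    rw [abs_mul]
    have : |(e:ℝ)| = 1 := by rw [← her]; simp
    rw [this, one_mul]
  rw [habs]
  have h1 := hs.1
  have h2 := hs'.1
  set t := (e:ℝ) * theta ρ n
  set t' := (e:ℝ) * -1 * theta ρ (n+1)
  have ee : (e:ℝ) * (u * theta ρ n + v * theta ρ (n+1)) = u * t - v * t' := by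
    simp only [t, t']; ring
  rw [ee]
  rcases hsame with ⟨a, b⟩ | ⟨a, b⟩
  · have a' : (1:ℝ) ≤ u := by exact_mod_cast a
    have b' : (v:ℝ) ≤ 0 := by exact_mod_cast b
    refine le_trans ?_ (le_abs_self _)
    nlinarith
  · have a' : (u:ℝ) ≤ -1 := by exact_mod_cast a
    have b' : (0:ℝ) ≤ v := by exact_mod_cast b
    refine le_trans ?_ (neg_le_abs _)
    nlinarith

theorem orbit_lt (F : ℝ → ℝ) (hmono : StrictMono F) (hdeg : ∀ x, F (x + 1) = F x + 1)
    (ρ : ℝ) (hrot : HasRotationNumber F ρ) (i j : ℕ) (p : ℤ)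
    (h : (i:ℝ) * ρ + p < j * ρ) (x : ℝ) : F^[i] x + p < F^[j] x := by
  let g : CircleDeg1Lift := ⟨⟨F, hmono.monotone⟩, hdeg⟩
  have hg : ⇑g = F := rfl
  have hτ : g.translationNumber = ρ := by
    refine tendsto_nhds_unique g.tendsto_translation_number₀ ?_
    have := hrot
    unfold HasRotationNumber at this
    simpa [CircleDeg1Lift.coe_pow, hg] using this
  have hpow : ∀ k : ℕ, (g^k).translationNumber = k * ρ := by
    intro k; rw [CircleDeg1Lift.translationNumber_pow, hτ]
  rcases le_total i j with hij | hij
  · obtain ⟨k, rfl⟩ := Nat.exists_eq_add_of_le hij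
    rw [add_comm i k, Function.iterate_add_apply]
    by_contra hc
    push Not at hc
    have := CircleDeg1Lift.translationNumber_le_of_le_add_int (g^k) (x := F^[i] x) (m := p)
      (by rw [CircleDeg1Lift.coe_pow, hg]; exact hc)
    rw [hpow] at this
    push_cast at h
    nlinarith
  · obtain ⟨k, rfl⟩ := Nat.exists_eq_add_of_le hij
    rw [add_comm j k, Function.iterate_add_apply]
    by_contra hc
    push Not at hc
    have := CircleDeg1Lift.le_translationNumber_of_add_int_le (g^k) (x := F^[j] x) (m := -p)
      (by rw [CircleDeg1Lift.coe_pow, hg]; push_cast; linarith)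
    rw [hpow] at this
    push_cast at h this
    nlinarith

/-! ## Part 2: cross-ratio distortion and the abstract real bounds -/

/-- cross-ratio of four points -/
def Cr (a b c d : ℝ) : ℝ := (b - a) * (d - c) / ((c - a) * (d - b))

theorem Cr_add (a b c d t : ℝ) : Cr (a + t) (b + t) (c + t) (d + t) = Cr a b c d := by
  unfold Cr; congr 1 <;> ring

theorem Cr_sub (a b c d t : ℝ) : Cr (a - t) (b - t) (c - t) (d - t) = Cr a b c d := by
  unfold Cr; congr 1 <;> ring

theorem Cr_le_left {a b c d : ℝ} (h1 : a < b) (h2 : b < c) (h3 : c < d) :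
    Cr a b c d ≤ (b - a) / (c - a) := by
  unfold Cr
  rw [div_le_div_iff₀ (mul_pos (by linarith) (by linarith)) (by linarith)]
  have : 0 < (b - a) * (c - a) := mul_pos (by linarith) (by linarith)
  nlinarith

theorem Cr_le_right {a b c d : ℝ} (h1 : a < b) (h2 : b < c) (h3 : c < d) :
    Cr a b c d ≤ (d - c) / (d - b) := by
  unfold Cr
  rw [div_le_div_iff₀ (mul_pos (by linarith) (by linarith)) (by linarith)]
  have : 0 < (d - c) * (d - b) := mul_pos (by linarith) (by linarith)
  nlinarith

theorem Cr_lower {a b c d η : ℝ} (h1 : a < b) (h2 : b < c) (h3 : c < d) (hη : 0 ≤ η)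
    (h : η ≤ Cr a b c d) : η * (c - b) ≤ b - a ∧ η * (c - b) ≤ d - c := by
  constructor
  · have := h.trans (Cr_le_left h1 h2 h3)
    rw [le_div_iff₀ (by linarith)] at this
    nlinarith
  · have := h.trans (Cr_le_right h1 h2 h3)
    rw [le_div_iff₀ (by linarith)] at this
    nlinarith

/-- analytic information on a circle map lift -/
structure Ana (F Φ : ℝ → ℝ) (A D : ℝ) : Prop where
  cont : Continuous F
  mono : StrictMono F
  deg1 : ∀ x, F (x + 1) = F x + 1
  A0 : 0 ≤ A
  Φmono : Monotone Φ
  Φper : ∀ x, Φ (x + 1) = Φ x + D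
  cr : ∀ a b c d, a < b → b < c → c < d → d ≤ a + 3 →
    Cr (F a) (F b) (F c) (F d) ≤ Real.exp (A * (Φ d - Φ a)) * Cr a b c d

/-- return map -/
def Rm (F : ℝ → ℝ) (q : ℕ) (p : ℤ) (x : ℝ) : ℝ := F^[q] x - p

theorem add_int_of_per {g : ℝ → ℝ} {D : ℝ} (h : ∀ x, g (x + 1) = g x + D) (m : ℤ) (x : ℝ) :
    g (x + m) = g x + m * D := by
  induction m using Int.induction_on with
  | zero => simp
  | succ i ih =>
    push_cast at *
    rw [← add_assoc, h, ih]; ring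
  | pred i ih =>
    have := h (x + ((-(i:ℤ) - 1 : ℤ) : ℝ))
    push_cast at *
    have e : x + (-(i:ℝ) - 1) + 1 = x + -(i:ℝ) := by ring
    rw [e, ih] at this
    linarith

theorem iter_add_int {F : ℝ → ℝ} (h : ∀ x, F (x + 1) = F x + 1) (k : ℕ) (m : ℤ) (x : ℝ) :
    F^[k] (x + m) = F^[k] x + m := by
  induction k generalizing x with
  | zero => rfl
  | succ k ih =>
    rw [Function.iterate_succ_apply, Function.iterate_succ_apply, add_int_of_per h, mul_one, ih]

theorem iter_sub_int {F : ℝ → ℝ} (h : ∀ x, F (x + 1) = F x + 1) (k : ℕ) (m : ℤ) (x : ℝ) :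
    F^[k] (x - m) = F^[k] x - m := by
  have := iter_add_int h k (-m) x
  push_cast at this
  simpa [sub_eq_add_neg] using this

theorem iter_Rm {F : ℝ → ℝ} (h : ∀ x, F (x + 1) = F x + 1) (k q : ℕ) (p : ℤ) (x : ℝ) :
    F^[k] (Rm F q p x) = Rm F q p (F^[k] x) := by
  unfold Rm
  rw [iter_sub_int h, ← Function.iterate_add_apply, ← Function.iterate_add_apply, add_comm]

theorem Rm_Rm {F : ℝ → ℝ} (h : ∀ x, F (x + 1) = F x + 1) (q q' : ℕ) (p p' : ℤ) (x : ℝ) :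
    Rm F q p (Rm F q' p' x) = Rm F q' p' (Rm F q p x) := by
  conv_lhs => rw [Rm, iter_Rm h]
  unfold Rm
  rw [iter_sub_int h]; ring

theorem Rm_add_int {F : ℝ → ℝ} (h : ∀ x, F (x + 1) = F x + 1) (q : ℕ) (p m : ℤ) (x : ℝ) :
    Rm F q p (x + m) = Rm F q p x + m := by
  unfold Rm; rw [iter_add_int h]; ring

theorem Rm_strictMono {F : ℝ → ℝ} (h : StrictMono F) (q : ℕ) (p : ℤ) : StrictMono (Rm F q p) := by
  intro x y hxy
  unfold Rm
  have := h.iterate q hxy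
  linarith

theorem Rm_surj {F : ℝ → ℝ} (hc : Continuous F) (hm : StrictMono F)
    (h : ∀ x, F (x + 1) = F x + 1) (q : ℕ) (p : ℤ) : Function.Surjective (Rm F q p) := by
  let g : CircleDeg1Lift := ⟨⟨F, hm.monotone⟩, h⟩
  have hs : Function.Surjective F := (CircleDeg1Lift.continuous_iff_surjective g).mp hc
  intro y
  obtain ⟨x, hx⟩ := (hs.iterate q) (y + p)
  exact ⟨x, by unfold Rm; rw [hx]; ring⟩

/-- combinatorics of two consecutive return maps, the first one moving to the right -/
structure Comb (F : ℝ → ℝ) (q q' : ℕ) (p p' : ℤ) : Prop where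
  hq : 0 < q
  hqq : q ≤ q'
  up : ∀ x, x < Rm F q p x
  le1 : ∀ x, Rm F q p x ≤ x + 1
  dn : ∀ x, Rm F q' p' x < x
  dom : ∀ x, x < Rm F q p (Rm F q' p' x)
  disj : ∀ k, 0 < k → k < q' → ∀ (m : ℤ) (x : ℝ),
    Rm F q p x ≤ F^[k] x + m ∨ Rm F q p (F^[k] x) + m ≤ x

theorem sum_disjoint {Φ : ℝ → ℝ} (hΦ : Monotone Φ) (s : Finset ℕ) (a b : ℕ → ℝ) (A : ℝ)
    (hab : ∀ j, a j < b j) (hA : ∀ j ∈ s, A ≤ a j)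
    (hd : ∀ i ∈ s, ∀ j ∈ s, i ≠ j → b i ≤ a j ∨ b j ≤ a i) :
    ∀ B, A ≤ B → (∀ j ∈ s, b j ≤ B) → ∑ j ∈ s, (Φ (b j) - Φ (a j)) ≤ Φ B - Φ A := by
  induction s using Finset.induction_on_max_value a with
  | empty => intro B hB _; simpa using hΦ hB
  | insert i s hi hmax ih =>
    intro B hB hb
    rw [Finset.sum_insert hi]
    have h1 := ih (fun j hj => hA j (Finset.mem_insert_of_mem hj))
      (fun j hj k hk => hd j (Finset.mem_insert_of_mem hj) k (Finset.mem_insert_of_mem hk))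
      (a i) (hA i (Finset.mem_insert_self _ _)) (by
        intro j hj
        have hne : j ≠ i := by rintro rfl; exact hi hj
        rcases hd j (Finset.mem_insert_of_mem hj) i (Finset.mem_insert_self _ _) hne with h | h
        · exact h
        · have := hmax j hj
          have := hab i
          linarith)
    have h2 := hΦ (hb i (Finset.mem_insert_self _ _))
    linarith

section abstractbounds

variable {F Φ : ℝ → ℝ} {A D : ℝ} {q q' : ℕ} {p p' : ℤ}

theorem Ana.D0 (ha : Ana F Φ A D) : 0 ≤ D := by
  have h1 := ha.Φper 0
  have h2 := ha.Φmono (show (0:ℝ) ≤ 0 + 1 by norm_num)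
  linarith

theorem sum_one (ha : Ana F Φ A D) (hc : Comb F q q' p p') (x : ℝ) :
    ∑ j ∈ Finset.range q', (Φ (Rm F q p (F^[j] x)) - Φ (F^[j] x)) ≤ D := by
  let m : ℕ → ℤ := fun j => -⌊F^[j] x - x⌋
  have hm1 : ∀ j, x ≤ F^[j] x + m j := by
    intro j
    have := Int.floor_le (F^[j] x - x)
    simp only [m]; push_cast; linarith
  have hm2 : ∀ j, F^[j] x + m j < x + 1 := by
    intro j
    have := Int.lt_floor_add_one (F^[j] x - x)
    simp only [m]; push_cast; linarith
  have hd' : ∀ i j, i < j → j < q' →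
      (Rm F q p (F^[i] x) + m i ≤ F^[j] x + m j ∨ Rm F q p (F^[j] x) + m j ≤ F^[i] x + m i) := by
    intro i j hij hj
    have e : F^[j - i] (F^[i] x) = F^[j] x := by
      rw [← Function.iterate_add_apply, Nat.sub_add_cancel hij.le]
    have := hc.disj (j - i) (by omega) (by omega) (m j - m i) (F^[i] x)
    rw [e] at this
    push_cast at this
    rcases this with h | h
    · left; linarith
    · right; linarith
  have key := sum_disjoint ha.Φmono (Finset.range q') (fun j => F^[j] x + m j)
    (fun j => Rm F q p (F^[j] x) + m j) x
    (fun j => by have := hc.up (F^[j] x); linarith)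
    (fun j _ => hm1 j)
    (by
      intro i hi j hj hij
      simp only [Finset.mem_range] at hi hj
      rcases lt_or_gt_of_ne hij with h | h
      · exact hd' i j h hj
      · exact (hd' j i h hi).symm)
    (x + 1) (by linarith)
    (by
      intro j hj
      simp only [Finset.mem_range] at hj
      rcases Nat.eq_zero_or_pos j with h | h
      · subst h
        have := hc.le1 x
        simpa [m] using this
      · have := hc.disj j h hj (m j - 1) x
        push_cast at this
        rcases this with h | h
        · have := hc.up x
          have := hm2 j
          linarith
        · linarith)
  rw [ha.Φper x] at key
  refine le_trans (le_of_eq ?_) (key.trans (by linarith))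
  apply Finset.sum_congr rfl
  intro j _
  rw [add_int_of_per ha.Φper, add_int_of_per ha.Φper]
  ring

/-- The cross-ratio inequality. -/
theorem CRI (ha : Ana F Φ A D) (hc : Comb F q q' p p') {a b c d : ℝ} (h1 : a < b) (h2 : b < c)
    (h3 : c < d) (hd : d ≤ Rm F q p (Rm F q p (Rm F q p a))) (j : ℕ) (hj : j ≤ q') :
    Cr (F^[j] a) (F^[j] b) (F^[j] c) (F^[j] d) ≤ Real.exp (A * (3 * D)) * Cr a b c d := by
  have hd3 : d ≤ a + ((3 : ℤ) : ℝ) := by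
    have e1 := hc.le1 a
    have e2 := hc.le1 (Rm F q p a)
    have e3 := hc.le1 (Rm F q p (Rm F q p a))
    push_cast; linarith
  have hm : ∀ i, StrictMono (F^[i]) := fun i => ha.mono.iterate i
  have step : ∀ j : ℕ, Cr (F^[j] a) (F^[j] b) (F^[j] c) (F^[j] d) ≤
      Real.exp (A * ∑ i ∈ Finset.range j, (Φ (F^[i] d) - Φ (F^[i] a))) * Cr a b c d := by
    intro j
    induction j with
    | zero => simp
    | succ j ih =>
      have hh := ha.cr (F^[j] a) (F^[j] b) (F^[j] c) (F^[j] d) (hm j h1) (hm j h2) (hm j h3) (by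
        have := (hm j).monotone hd3
        rw [iter_add_int ha.deg1] at this
        push_cast at this; exact this)
      simp only [Function.iterate_succ_apply']
      refine hh.trans ?_
      rw [Finset.sum_range_succ, mul_add, add_comm, Real.exp_add, mul_assoc]
      exact mul_le_mul_of_nonneg_left ih (Real.exp_pos _).le
  refine (step j).trans ?_
  have hCr : 0 ≤ Cr a b c d := by
    unfold Cr
    apply div_nonneg <;> apply mul_nonneg <;> linarith
  apply mul_le_mul_of_nonneg_right _ hCr
  apply Real.exp_le_exp.mpr
  apply mul_le_mul_of_nonneg_left _ ha.A0
  have s1 := sum_one ha hc a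
  have s2 := sum_one ha hc (Rm F q p a)
  have s3 := sum_one ha hc (Rm F q p (Rm F q p a))
  calc ∑ i ∈ Finset.range j, (Φ (F^[i] d) - Φ (F^[i] a))
      ≤ ∑ i ∈ Finset.range q', (Φ (F^[i] d) - Φ (F^[i] a)) := by
        apply Finset.sum_le_sum_of_subset_of_nonneg
        · intro i; simp only [Finset.mem_range]; omega
        · intro i _ _
          have := ha.Φmono ((hm i).monotone (show a ≤ d by linarith))
          linarith
    _ ≤ ∑ i ∈ Finset.range q', ((Φ (Rm F q p (F^[i] a)) - Φ (F^[i] a))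
        + (Φ (Rm F q p (F^[i] (Rm F q p a))) - Φ (F^[i] (Rm F q p a)))
        + (Φ (Rm F q p (F^[i] (Rm F q p (Rm F q p a)))) - Φ (F^[i] (Rm F q p (Rm F q p a))))) := by
        apply Finset.sum_le_sum
        intro i _
        have := ha.Φmono ((hm i).monotone hd)
        simp only [iter_Rm ha.deg1] at *
        linarith
    _ ≤ 3 * D := by
        rw [Finset.sum_add_distrib, Finset.sum_add_distrib]
        linarith

theorem CRI_Rm (ha : Ana F Φ A D) (hc : Comb F q q' p p') {a b c d : ℝ} (h1 : a < b) (h2 : b < c)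
    (h3 : c < d) (hd : d ≤ Rm F q p (Rm F q p (Rm F q p a))) :
    Cr (Rm F q p a) (Rm F q p b) (Rm F q p c) (Rm F q p d)
      ≤ Real.exp (A * (3 * D)) * Cr a b c d := by
  unfold Rm
  rw [Cr_sub]
  exact CRI ha hc h1 h2 h3 hd q hc.hqq

theorem entrance (ha : Ana F Φ A D) (hc : Comb F q q' p p') (x y : ℝ) :
    ∃ (i : ℕ) (m : ℤ), i < q' + q ∧ F^[i] x + m ≤ y ∧ y < Rm F q p (F^[i] x + m) := by
  let m : ℕ → ℤ := fun i => ⌊y - F^[i] x⌋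
  have hm1 : ∀ i, F^[i] x + m i ≤ y := fun i => by
    have := Int.floor_le (y - F^[i] x); simp only [m]; linarith
  have hm2 : ∀ i (k : ℤ), F^[i] x + k ≤ y → F^[i] x + k ≤ F^[i] x + m i := fun i k h => by
    have : k ≤ m i := Int.le_floor.mpr (by linarith)
    have : (k:ℝ) ≤ m i := by exact_mod_cast this
    linarith
  obtain ⟨i, hi, hmax⟩ := Finset.exists_max_image (Finset.range (q' + q))
    (fun i => F^[i] x + m i) ⟨0, by simp only [Finset.mem_range]; have := hc.hq; omega⟩
  simp only [Finset.mem_range] at hi hmax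
  refine ⟨i, m i, hi, hm1 i, ?_⟩
  by_contra hcon
  push Not at hcon
  have hup := hc.up (F^[i] x + m i)
  by_cases hiq : i + q < q' + q
  · have e : Rm F q p (F^[i] x + m i) = F^[i + q] x + ((m i - p : ℤ) : ℝ) := by
      rw [Rm_add_int ha.deg1]; unfold Rm
      rw [← Function.iterate_add_apply, add_comm q i]; push_cast; ring
    have h1 := hm2 (i + q) (m i - p) (by rw [← e]; exact hcon)
    have h2 := hmax (i + q) hiq
    rw [← e] at h1
    linarith
  · obtain ⟨i', rfl⟩ := Nat.exists_eq_add_of_le (show q' ≤ i by omega)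
    have e : Rm F q' p' (F^[i'] x + ((m (q' + i') + p' : ℤ) : ℝ)) = F^[q' + i'] x + m (q' + i') := by
      rw [Rm_add_int ha.deg1]; unfold Rm
      rw [← Function.iterate_add_apply]; push_cast; ring
    have h1 := hc.dn (F^[i'] x + ((m (q' + i') + p' : ℤ) : ℝ))
    have h2 := hc.dom (F^[i'] x + ((m (q' + i') + p' : ℤ) : ℝ))
    rw [e] at h1 h2
    have h3 := hm2 i' (m (q' + i') + p') (by linarith)
    have h4 := hmax i' (by omega)
    linarith

/-- neighbouring fundamental domains are comparable -/
def Esym (R : ℝ → ℝ) (C : ℝ) : Prop :=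
  ∀ x, |R (R x) - R x| ≤ C * |R x - x| ∧ |R x - x| ≤ C * |R (R x) - R x|

theorem exists_min (ha : Ana F Φ A D) : ∃ z, ∀ x, Rm F q p z - z ≤ Rm F q p x - x := by
  have hcont : Continuous (fun x => Rm F q p x - x) := by
    unfold Rm
    exact ((ha.cont.iterate q).sub continuous_const).sub continuous_id
  obtain ⟨z, _, hz⟩ := isCompact_Icc.exists_isMinOn (s := Set.Icc (0:ℝ) 1)
    ⟨0, by simp⟩ hcont.continuousOn
  refine ⟨z, fun x => ?_⟩
  have h1 : Int.fract x ∈ Set.Icc (0:ℝ) 1 := ⟨Int.fract_nonneg x, (Int.fract_lt_one x).le⟩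
  have h2 := hz h1
  simp only [Set.mem_ofPred_eq] at h2
  have h3 : Rm F q p x = Rm F q p (Int.fract x) + ⌊x⌋ := by
    rw [← Rm_add_int ha.deg1, Int.fract_add_floor]
  have h4 := Int.fract_add_floor x
  linarith

set_option maxHeartbeats 1000000 in
theorem B1 (A D : ℝ) : ∃ C : ℝ, 1 ≤ C ∧ ∀ (F Φ : ℝ → ℝ) (q q' : ℕ) (p p' : ℤ),
    Ana F Φ A D → Comb F q q' p p' → Esym (Rm F q p) C := by
  obtain ⟨B, hB⟩ : ∃ B, B = Real.exp (A * (3 * D)) := ⟨_, rfl⟩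
  have hB0 : 0 < B := by rw [hB]; exact Real.exp_pos _
  obtain ⟨K, hK⟩ : ∃ K, K = 1 + 4*B + (4*B)*(4*B^2) + (4*B)*(4*B^2)*(4*B^3) := ⟨_, rfl⟩
  have hK1 : 1 ≤ K := by
    rw [hK]
    have : 0 < 4*B + (4*B)*(4*B^2) + (4*B)*(4*B^2)*(4*B^3) := by positivity
    linarith
  refine ⟨max 1 (K^2*B^2), le_max_left _ _, ?_⟩
  intro F Φ q q' p p' ha hc
  set R := Rm F q p with hR
  have hRm : StrictMono R := Rm_strictMono ha.mono q p
  have hRs : Function.Surjective R := Rm_surj ha.cont ha.mono ha.deg1 q p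
  have hup : ∀ x, x < R x := hc.up
  have cri : ∀ x, Cr (R x) (R (R x)) (R (R (R x))) (R (R (R (R x))))
      ≤ B * Cr x (R x) (R (R x)) (R (R (R x))) := by
    intro x
    rw [hB]
    exact CRI_Rm ha hc (hup _) (hup _) (hup _) le_rfl
  -- all points
  have main : ∀ x, 1 / (K^2 * B^2) ≤ Cr x (R x) (R (R x)) (R (R (R x))) := by
    obtain ⟨u4, hz⟩ := exists_min (q := q) (p := p) ha
    rw [← hR] at hz
    obtain ⟨u3, h3⟩ := hRs u4
    obtain ⟨u2, h2⟩ := hRs u3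
    obtain ⟨u1, h1⟩ := hRs u2
    obtain ⟨u0, h0⟩ := hRs u1
    obtain ⟨u5, h4⟩ : ∃ u5, R u4 = u5 := ⟨_, rfl⟩
    obtain ⟨u6, h5⟩ : ∃ u6, R u5 = u6 := ⟨_, rfl⟩
    have z0 := hz u0; have z1 := hz u1; have z2 := hz u2; have z3 := hz u3; have z5 := hz u5
    have p0 := hup u0; have p1 := hup u1; have p2 := hup u2; have p3 := hup u3
    have p4 := hup u4; have p5 := hup u5
    have c0 := cri u0; have c1 := cri u1; have c2 := cri u2
    simp only [h0, h1, h2, h3, h4, h5] at z0 z1 z2 z3 z5 p0 p1 p2 p3 p4 p5 c0 c1 c2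
    have c3 : 1/4 ≤ Cr u3 u4 u5 u6 := by
      unfold Cr
      rw [le_div_iff₀ (mul_pos (by linarith) (by linarith))]
      have e1 : u5 - u3 ≤ 2 * (u4 - u3) := by linarith
      have e2 : u6 - u4 ≤ 2 * (u6 - u5) := by linarith
      have := mul_le_mul e1 e2 (by linarith) (by linarith)
      linarith
    have b2 : 1/(4*B) ≤ Cr u2 u3 u4 u5 := by
      rw [div_le_iff₀ (by positivity)]; nlinarith
    have b1 : 1/(4*B^2) ≤ Cr u1 u2 u3 u4 := by
      rw [div_le_iff₀ (by positivity)] at b2 ⊢; nlinarith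
    have b0 : 1/(4*B^3) ≤ Cr u0 u1 u2 u3 := by
      rw [div_le_iff₀ (by positivity)] at b1 ⊢; nlinarith [sq_nonneg B, mul_pos hB0 hB0]
    have d3 := (Cr_lower p2 p3 p4 (by positivity) b2).2
    have d2 := (Cr_lower p1 p2 p3 (by positivity) b1).2
    have d1 := (Cr_lower p0 p1 p2 (by positivity) b0).2
    rw [div_mul_eq_mul_div, div_le_iff₀ (by positivity), one_mul] at d1 d2 d3
    obtain ⟨δ, hδ⟩ : ∃ δ, δ = u5 - u4 := ⟨_, rfl⟩
    have hδ0 : 0 < δ := by linarith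
    have f3 : u4 - u3 ≤ δ * (4*B) := by rw [hδ]; exact d3
    have f2 : u3 - u2 ≤ δ * (4*B) * (4*B^2) :=
      d2.trans (mul_le_mul_of_nonneg_right f3 (by positivity))
    have f1 : u2 - u1 ≤ δ * (4*B) * (4*B^2) * (4*B^3) :=
      d1.trans (mul_le_mul_of_nonneg_right f2 (by positivity))
    have tot : u5 - u1 ≤ K * δ := by
      rw [hK]
      have : u5 - u1 = δ + (u4 - u3) + (u3 - u2) + (u2 - u1) := by rw [hδ]; ring
      rw [this]
      linarith
    intro x
    obtain ⟨i, m, hi, hy1, hy2⟩ := entrance ha hc x u2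
    rw [← hR] at hy2
    set v := F^[i] x + m with hv
    have v0 : u1 < v := by
      rw [← h1] at hy2; exact hRm.lt_iff_lt.mp hy2
    have v1 : R v ≤ u3 := by rw [← h2]; exact hRm.monotone hy1
    have v2 : R (R v) ≤ u4 := by rw [← h3]; exact hRm.monotone v1
    have v3 : R (R (R v)) ≤ u5 := by rw [← h4]; exact hRm.monotone v2
    have w0 := hz v; have w1 := hz (R v); have w2 := hz (R (R v))
    rw [h4, ← hδ] at w0 w1 w2
    have cv : 1/K^2 ≤ Cr v (R v) (R (R v)) (R (R (R v))) := by
      unfold Cr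
      rw [div_le_div_iff₀ (by positivity) (mul_pos (by linarith) (by linarith)), one_mul]
      have e1 : R (R v) - v ≤ K * (R v - v) := by
        have := mul_le_mul_of_nonneg_left w0 (show 0 ≤ K by linarith)
        linarith [hup (R v), hup (R (R v))]
      have e2 : R (R (R v)) - R v ≤ K * (R (R (R v)) - R (R v)) := by
        have := mul_le_mul_of_nonneg_left w2 (show 0 ≤ K by linarith)
        linarith [hup v]
      have := mul_le_mul e1 e2 (by linarith) (mul_nonneg (by linarith) (by linarith))
      linarith
    have cv' : Cr v (R v) (R (R v)) (R (R (R v))) =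
        Cr (F^[i] x) (F^[i] (R x)) (F^[i] (R (R x))) (F^[i] (R (R (R x)))) := by
      rw [hv, hR]
      simp only [Rm_add_int ha.deg1, iter_Rm ha.deg1, Cr_add]
    obtain ⟨i1, i2, hi1, hi2, hii⟩ : ∃ i1 i2, i1 ≤ q' ∧ i2 ≤ q' ∧ i = i2 + i1 := by
      have := hc.hqq
      rcases le_total i q' with h | h
      · exact ⟨i, 0, h, by omega, by omega⟩
      · exact ⟨q', i - q', le_rfl, by omega, by omega⟩
    have s1 := CRI ha hc (hup x) (hup (R x)) (hup (R (R x))) le_rfl i1 hi1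
    have s2 := CRI ha hc (hup (F^[i1] x)) (hup (R (F^[i1] x))) (hup (R (R (F^[i1] x)))) le_rfl i2 hi2
    rw [cv', hii] at cv
    simp only [hR, Function.iterate_add_apply, iter_Rm ha.deg1] at cv s1 s2 ⊢
    rw [← hB] at s1 s2
    have := cv.trans (s2.trans (mul_le_mul_of_nonneg_left s1 hB0.le))
    rw [div_le_iff₀ (by positivity)] at this ⊢
    linarith
  have main2 : ∀ x, R (R x) - R x ≤ K^2*B^2 * (R x - x) ∧
      R (R x) - R x ≤ K^2*B^2 * (R (R (R x)) - R (R x)) := by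
    intro x
    have := Cr_lower (hup x) (hup _) (hup _) (by positivity) (main x)
    rw [div_mul_eq_mul_div, div_le_iff₀ (by positivity), div_le_iff₀ (by positivity)] at this
    constructor <;> linarith [this.1, this.2]
  intro x
  have a1 : 0 < R x - x := by linarith [hup x]
  have a2 : 0 < R (R x) - R x := by linarith [hup (R x)]
  rw [abs_of_pos a1, abs_of_pos a2]
  constructor
  · exact (main2 x).1.trans (mul_le_mul_of_nonneg_right (le_max_right _ _) a1.le)
  · obtain ⟨y, rfl⟩ := hRs x
    exact (main2 y).2.trans (mul_le_mul_of_nonneg_right (le_max_right _ _) a2.le)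

end abstractbounds

/-! ## Part 3: pull-back of goodness, critical points, reflection -/

section abstractbounds2

variable {F Φ : ℝ → ℝ} {A D : ℝ} {q q' : ℕ} {p p' : ℤ}

theorem B2 (ha : Ana F Φ A D) (hc : Comb F q q' p p') {C : ℝ} (hC : 1 ≤ C)
    (hE : Esym (Rm F q p) C) {κ : ℝ} (hκ : 0 < κ) (hκ1 : κ ≤ 1) (w : ℝ) (j : ℕ) (hj : j ≤ q')
    (h : κ * |Rm F q p (F^[j] w) - F^[j] w| ≤ |Rm F q' p' (F^[j] w) - F^[j] w|) :
    κ / (2 * (1 + C) * Real.exp (A * (3 * D))) * |Rm F q p w - w| ≤ |Rm F q' p' w - w| := by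
  obtain ⟨B, hB⟩ : ∃ B, B = Real.exp (A * (3 * D)) := ⟨_, rfl⟩
  have hB0 : 0 < B := by rw [hB]; exact Real.exp_pos _
  have hRm : StrictMono (Rm F q p) := Rm_strictMono ha.mono q p
  have hspan : Rm F q p (Rm F q p w) ≤ Rm F q p (Rm F q p (Rm F q p (Rm F q' p' w))) :=
    hRm.monotone (hRm.monotone (hc.dom w).le)
  have key := CRI ha hc (hc.dn w) (hc.up w) (hc.up _) hspan j hj
  simp only [iter_Rm ha.deg1] at key
  rw [← hB] at key ⊢
  set y := F^[j] w
  have k1 := hc.dn y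
  have k2 := hc.up y
  have k3 := hc.up (Rm F q p y)
  have hEy := (hE y).2
  rw [abs_of_pos (by linarith : 0 < Rm F q p y - y), abs_of_neg (by linarith : Rm F q' p' y - y < 0)] at h
  rw [abs_of_pos (by linarith : 0 < Rm F q p y - y), abs_of_pos (by linarith)] at hEy
  have low : κ / (2 * (1 + C)) ≤ Cr (Rm F q' p' y) y (Rm F q p y) (Rm F q p (Rm F q p y)) := by
    unfold Cr
    rw [div_le_div_iff₀ (by positivity) (mul_pos (by linarith) (by linarith))]
    have e1 : κ * (Rm F q p y - Rm F q' p' y) ≤ 2 * (y - Rm F q' p' y) := by nlinarith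
    have e2 : Rm F q p (Rm F q p y) - y ≤ (1 + C) * (Rm F q p (Rm F q p y) - Rm F q p y) := by
      nlinarith
    have := mul_le_mul e1 e2 (by linarith) (by linarith)
    linarith
  have low0 : κ / (2 * (1 + C) * B) ≤ Cr (Rm F q' p' w) w (Rm F q p w) (Rm F q p (Rm F q p w)) := by
    have := low.trans key
    rw [div_le_iff₀ (by positivity)] at this ⊢
    linarith
  have := (Cr_lower (hc.dn w) (hc.up w) (hc.up _) (by positivity) low0).1
  rw [abs_of_pos (by linarith [hc.up w] : 0 < Rm F q p w - w),
    abs_of_neg (by linarith [hc.dn w] : Rm F q' p' w - w < 0)]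
  linarith

/-- two-sided power law at a critical point -/
def PowL (F : ℝ → ℝ) (c K s : ℝ) : Prop :=
  ∀ t, 0 < t → t ≤ 1 →
    (F c - F (c - t) ≤ K * t ^ s ∧ t ^ s ≤ K * (F c - F (c - t))) ∧
    (F (c + t) - F c ≤ K * t ^ s ∧ t ^ s ≤ K * (F (c + t) - F c))

theorem B3 (A D C K s : ℝ) (hC : 1 ≤ C) (hK : 0 < K) (hs : 1 < s) :
    ∃ κ : ℝ, 0 < κ ∧ ∀ (F Φ : ℝ → ℝ) (q q' : ℕ) (p p' : ℤ) (c : ℝ),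
    Ana F Φ A D → Comb F q q' p p' → Esym (Rm F q p) C → Esym (Rm F q' p') C → PowL F c K s →
    κ * |Rm F q p c - c| ≤ |Rm F q' p' c - c| := by
  obtain ⟨B, hB⟩ : ∃ B, B = Real.exp (A * (3 * D)) := ⟨_, rfl⟩
  have hB0 : 0 < B := by rw [hB]; exact Real.exp_pos _
  have hC0 : 0 < C := by linarith
  obtain ⟨κ₀, hκ₀⟩ : ∃ κ₀, κ₀ = 1 / ((1 + C) * C * ((C + 1) * (C * (1 + C)) + 1)) := ⟨_, rfl⟩
  have hκ₀0 : 0 < κ₀ := by rw [hκ₀]; positivity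
  refine ⟨(κ₀ / (B * K ^ 2)) ^ (1 / (s - 1)), by positivity, ?_⟩
  intro F Φ q q' p p' c ha hc hE hE' hP
  have hRm : StrictMono (Rm F q p) := Rm_strictMono ha.mono q p
  have o1 := hc.dn c
  have o2 := hc.up c
  have o3 := hc.dom c
  have o4 := hc.le1 c
  have o5 := hc.le1 (Rm F q' p' c)
  have o6 := hc.dn (Rm F q' p' c)
  have o7 := hc.up (Rm F q p c)
  have o8 := hRm o1
  have o9 := hRm o8
  have o10 := hc.up (Rm F q p (Rm F q' p' c))
  have hspan : Rm F q p (Rm F q p (F c)) ≤ Rm F q p (Rm F q p (Rm F q p (Rm F q' p' (F c)))) :=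
    hRm.monotone (hRm.monotone (hc.dom _).le)
  have key := CRI ha hc (hc.dn (F c)) (hc.up (F c)) (hc.up _) hspan (q' - 1) (by omega)
  have hq' : q' - 1 + 1 = q' := by have := hc.hq; have := hc.hqq; omega
  have ec : F^[q' - 1] (F c) = F^[q'] c := by
    rw [← Function.iterate_succ_apply, Nat.succ_eq_add_one, hq']
  simp only [iter_Rm ha.deg1, ec] at key
  have ec2 : F^[q'] c = Rm F q' p' c + p' := by unfold Rm; ring
  simp only [ec2, Rm_add_int ha.deg1, Cr_add] at key
  have comF : ∀ (k : ℕ) (m : ℤ) (x : ℝ), Rm F k m (F x) = F (Rm F k m x) := by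
    intro k m x
    have := iter_Rm ha.deg1 1 k m x
    simpa using this.symm
  simp only [comF] at key
  rw [← hB] at key
  -- lengths
  obtain ⟨L, hL⟩ : ∃ L, L = c - Rm F q' p' c := ⟨_, rfl⟩
  obtain ⟨M, hM⟩ : ∃ M, M = Rm F q p c - c := ⟨_, rfl⟩
  have hL0 : 0 < L := by linarith
  have hM0 : 0 < M := by linarith
  have hP1 := (hP L hL0 (by linarith)).1.1
  have hP2 := (hP M hM0 (by linarith)).2.2
  have eL : c - L = Rm F q' p' c := by linarith
  have eM : c + M = Rm F q p c := by linarith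
  rw [eL] at hP1
  rw [eM] at hP2
  have up1 : Cr (F (Rm F q' p' c)) (F c) (F (Rm F q p c)) (F (Rm F q p (Rm F q p c)))
      ≤ K ^ 2 * (L / M) ^ s := by
    refine (Cr_le_left (ha.mono o1) (ha.mono o2) (ha.mono o7)).trans ?_
    have m1 := ha.mono o1
    have m2 := ha.mono o2
    rw [div_le_iff₀ (by linarith), Real.div_rpow hL0.le hM0.le]
    have hMs : 0 < M ^ s := Real.rpow_pos_of_pos hM0 s
    have hLs : 0 < L ^ s := Real.rpow_pos_of_pos hL0 s
    have e3 : M ^ s ≤ K * (F (Rm F q p c) - F (Rm F q' p' c)) :=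
      hP2.trans (mul_le_mul_of_nonneg_left (by linarith) hK.le)
    calc F c - F (Rm F q' p' c) ≤ K * L ^ s := hP1
      _ = K * (L ^ s / M ^ s) * M ^ s := by field_simp
      _ ≤ K * (L ^ s / M ^ s) * (K * (F (Rm F q p c) - F (Rm F q' p' c))) :=
          mul_le_mul_of_nonneg_left e3 (by positivity)
      _ = _ := by ring
  -- final time lower bound
  have f1 := hE c
  have f2 := hE (Rm F q' p' c)
  have f3 := hE' c
  rw [abs_of_pos (by linarith : 0 < Rm F q p c - c), abs_of_pos (by linarith), ← hM] at f1
  rw [abs_of_pos (by linarith), abs_of_pos (by linarith)] at f2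
  rw [abs_of_neg (by linarith : Rm F q' p' c - c < 0), abs_of_neg (by linarith), neg_sub, neg_sub,
    ← hL] at f3
  have g1 : L ≤ C * (1 + C) * M := by
    have : Rm F q p (Rm F q p (Rm F q' p' c)) - Rm F q p (Rm F q' p' c) ≤ (1 + C) * M := by
      linarith [f1.1]
    have := mul_le_mul_of_nonneg_left this hC0.le
    linarith [f2.2]
  have low : κ₀ * (L / M) ≤ Cr (Rm F q' p' (Rm F q' p' c)) (Rm F q' p' c)
      (Rm F q p (Rm F q' p' c)) (Rm F q p (Rm F q p (Rm F q' p' c))) := by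
    rw [hκ₀]
    unfold Cr
    rw [div_mul_div_comm, div_le_div_iff₀ (by positivity) (mul_pos (by linarith) (by linarith))]
    have e1 : Rm F q p (Rm F q' p' c) - Rm F q' p' (Rm F q' p' c)
        ≤ ((C + 1) * (C * (1 + C)) + 1) * M := by
      have := mul_le_mul_of_nonneg_left g1 (show 0 ≤ C + 1 by linarith)
      linarith [f3.1]
    have e2 : Rm F q p (Rm F q p (Rm F q' p' c)) - Rm F q' p' c ≤ (1 + C) *
        (Rm F q p (Rm F q p (Rm F q' p' c)) - Rm F q p (Rm F q' p' c)) := by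
      linarith [f2.2]
    have e3 := mul_le_mul e1 e2 (by linarith) (by positivity)
    have e4 := mul_le_mul f3.2 e3 (mul_nonneg (by linarith) (by linarith))
      (mul_nonneg hC0.le (by linarith))
    linarith
  have fin := low.trans (key.trans (mul_le_mul_of_nonneg_left up1 hB0.le))
  obtain ⟨r, hr⟩ : ∃ r, r = L / M := ⟨_, rfl⟩
  have hr0 : 0 < r := by rw [hr]; positivity
  rw [← hr] at fin
  have hrs : r ^ s = r ^ (s - 1) * r := by
    rw [← Real.rpow_add_one hr0.ne']; congr 1; ring
  rw [hrs] at fin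
  have fin2 : κ₀ / (B * K ^ 2) ≤ r ^ (s - 1) := by
    rw [div_le_iff₀ (by positivity)]
    have : κ₀ * r ≤ (r ^ (s - 1) * (B * K ^ 2)) * r := by linarith
    exact le_of_mul_le_mul_right this hr0
  have fin3 : (κ₀ / (B * K ^ 2)) ^ (1 / (s - 1)) ≤ r := by
    have h1 := Real.rpow_le_rpow (by positivity) fin2 (show 0 ≤ 1 / (s - 1) by
      apply div_nonneg <;> linarith)
    rw [← Real.rpow_mul hr0.le, mul_one_div_cancel (by linarith), Real.rpow_one] at h1
    exact h1
  rw [hr, le_div_iff₀ hM0] at fin3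
  rw [abs_of_pos (by linarith : 0 < Rm F q p c - c),
    abs_of_neg (by linarith : Rm F q' p' c - c < 0), neg_sub, ← hL, ← hM]
  exact fin3

/-! ### reflection -/

/-- conjugation by `x ↦ -x` -/
def reflF (F : ℝ → ℝ) (x : ℝ) : ℝ := -F (-x)

theorem reflF_iter (F : ℝ → ℝ) (k : ℕ) (x : ℝ) : (reflF F)^[k] x = -F^[k] (-x) := by
  induction k generalizing x with
  | zero => simp
  | succ k ih => rw [Function.iterate_succ_apply, ih, Function.iterate_succ_apply]; simp [reflF]

theorem reflF_Rm (F : ℝ → ℝ) (q : ℕ) (p : ℤ) (x : ℝ) : Rm (reflF F) q (-p) x = -Rm F q p (-x) := by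
  unfold Rm; rw [reflF_iter]; push_cast; ring

theorem reflF_Rm2 (F : ℝ → ℝ) (q : ℕ) (p : ℤ) (x : ℝ) : Rm F q p x = -Rm (reflF F) q (-p) (-x) := by
  rw [reflF_Rm]; simp

theorem Cr_neg (a b c d : ℝ) : Cr (-a) (-b) (-c) (-d) = Cr d c b a := by
  unfold Cr; congr 1 <;> ring

theorem Ana.reflF (ha : Ana F Φ A D) : Ana (reflF F) (fun x => -Φ (-x)) A D where
  cont := (ha.cont.comp continuous_neg).neg
  mono := by
    intro x y h
    have := ha.mono (neg_lt_neg h)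
    simp only [_root_.reflF]; linarith
  deg1 := by
    intro x
    have := ha.deg1 (-(x + 1))
    have e : -(x + 1) + 1 = -x := by ring
    rw [e] at this
    simp only [_root_.reflF]; linarith
  A0 := ha.A0
  Φmono := by
    intro x y h
    have := ha.Φmono (neg_le_neg h)
    simp only; linarith
  Φper := by
    intro x
    have := ha.Φper (-(x + 1))
    have e : -(x + 1) + 1 = -x := by ring
    rw [e] at this
    linarith
  cr := by
    intro a b c d h1 h2 h3 h4
    have := ha.cr (-d) (-c) (-b) (-a) (by linarith) (by linarith) (by linarith) (by linarith)
    simp only [_root_.reflF, Cr_neg] at *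
    have e : -Φ (-d) - -Φ (-a) = Φ (-a) - Φ (-d) := by ring
    rw [e]
    exact this

/-- combinatorics, either orientation -/
def CombE (F : ℝ → ℝ) (q q' : ℕ) (p p' : ℤ) : Prop :=
  Comb F q q' p p' ∨ Comb (reflF F) q q' (-p) (-p')

theorem absneg (a b : ℝ) : |-a - b| = |a - -b| := by
  rw [← abs_neg]; congr 1; ring

theorem absneg2 (a b : ℝ) : |-a - -b| = |a - b| := by
  rw [← abs_neg]; congr 1; ring

theorem Esym_reflF {C : ℝ} : Esym (Rm (reflF F) q (-p)) C ↔ Esym (Rm F q p) C := by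
  unfold Esym
  constructor
  · intro h x
    have := h (-x)
    simp only [reflF_Rm, neg_neg, absneg2] at this
    exact this
  · intro h x
    have := h (-x)
    simp only [reflF_Rm, neg_neg, absneg]
    exact this

theorem PowL.reflF {c K s : ℝ} (h : PowL F c K s) : PowL (reflF F) (-c) K s := by
  intro t ht ht1
  obtain ⟨h1, h2⟩ := h t ht ht1
  have e1 : -(-c - t) = c + t := by ring
  have e2 : -(-c + t) = c - t := by ring
  simp only [_root_.reflF, e1, e2, neg_neg]
  have e3 : -F c - -F (c + t) = F (c + t) - F c := by ring
  have e4 : -F (c - t) - -F c = F c - F (c - t) := by ring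
  rw [e3, e4]
  exact ⟨h2, h1⟩

theorem B1E (A D : ℝ) : ∃ C : ℝ, 1 ≤ C ∧ ∀ (F Φ : ℝ → ℝ) (q q' : ℕ) (p p' : ℤ),
    Ana F Φ A D → CombE F q q' p p' → Esym (Rm F q p) C := by
  obtain ⟨C, hC, h⟩ := B1 A D
  refine ⟨C, hC, ?_⟩
  rintro F Φ q q' p p' ha (hc | hc)
  · exact h F Φ q q' p p' ha hc
  · exact Esym_reflF.mp (h _ _ q q' _ _ ha.reflF hc)

theorem B2E (ha : Ana F Φ A D) (hc : CombE F q q' p p') {C : ℝ} (hC : 1 ≤ C)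
    (hE : Esym (Rm F q p) C) {κ : ℝ} (hκ : 0 < κ) (hκ1 : κ ≤ 1) (w : ℝ) (j : ℕ) (hj : j ≤ q')
    (h : κ * |Rm F q p (F^[j] w) - F^[j] w| ≤ |Rm F q' p' (F^[j] w) - F^[j] w|) :
    κ / (2 * (1 + C) * Real.exp (A * (3 * D))) * |Rm F q p w - w| ≤ |Rm F q' p' w - w| := by
  rcases hc with hc | hc
  · exact B2 ha hc hC hE hκ hκ1 w j hj h
  · have := B2 ha.reflF hc hC (Esym_reflF.mpr hE) hκ hκ1 (-w) j hj (by
      simp only [reflF_Rm, reflF_iter, neg_neg, absneg2]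
      exact h)
    simp only [reflF_Rm, neg_neg, absneg2] at this
    exact this

theorem B3E (A D C K s : ℝ) (hC : 1 ≤ C) (hK : 0 < K) (hs : 1 < s) :
    ∃ κ : ℝ, 0 < κ ∧ ∀ (F Φ : ℝ → ℝ) (q q' : ℕ) (p p' : ℤ) (c : ℝ),
    Ana F Φ A D → CombE F q q' p p' → Esym (Rm F q p) C → Esym (Rm F q' p') C → PowL F c K s →
    κ * |Rm F q p c - c| ≤ |Rm F q' p' c - c| := by
  obtain ⟨κ, hκ, h⟩ := B3 A D C K s hC hK hs
  refine ⟨κ, hκ, ?_⟩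
  rintro F Φ q q' p p' c ha (hc | hc) hE hE' hP
  · exact h F Φ q q' p p' c ha hc hE hE' hP
  · have := h _ _ q q' _ _ (-c) ha.reflF hc (Esym_reflF.mpr hE) (Esym_reflF.mpr hE') hP.reflF
    simp only [reflF_Rm, neg_neg, absneg2] at this
    exact this

/-- betweenness in either order -/
def Btwn (a z b : ℝ) : Prop := (a ≤ z ∧ z ≤ b) ∨ (b ≤ z ∧ z ≤ a)

theorem Btwn.symm {a z b : ℝ} (h : Btwn a z b) : Btwn b z a := Or.symm h

theorem Btwn.abs_le {a z b : ℝ} (h : Btwn a z b) : |z - a| ≤ |b - a| := by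
  rcases h with ⟨h1, h2⟩ | ⟨h1, h2⟩
  · rw [abs_of_nonneg (by linarith), abs_of_nonneg (by linarith)]; linarith
  · rw [abs_of_nonpos (by linarith), abs_of_nonpos (by linarith)]; linarith

theorem CombE.btw (hc : CombE F q q' p p') (w : ℝ) :
    Btwn (Rm F q' p' w) w (Rm F q p (Rm F q' p' w)) := by
  rcases hc with hc | hc
  · exact Or.inl ⟨(hc.dn w).le, (hc.dom w).le⟩
  · right
    have h1 := hc.dn (-w)
    have h2 := hc.dom (-w)
    simp only [reflF_Rm, neg_neg] at h1 h2
    constructor <;> linarith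

theorem Ecomp {R : ℝ → ℝ} {C : ℝ} (hR : StrictMono R) (hC : 1 ≤ C) (hE : Esym R C) {w z : ℝ}
    (h : Btwn w z (R w)) : |R z - z| ≤ C * (1 + C) * |R w - w| ∧
      |R w - w| ≤ C * (1 + C) * |R z - z| := by
  have hw := hE w
  have hz := hE z
  have a0 := abs_nonneg (R w - w)
  rcases h with ⟨h1, h2⟩ | ⟨h1, h2⟩
  · have m1 := hR.monotone h1
    have m2 := hR.monotone h2
    have m3 := hR.monotone m1
    have m4 := hR.monotone m2
    rw [abs_of_nonneg (by linarith), abs_of_nonneg (by linarith)] at hw hz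
    rw [abs_of_nonneg (by linarith), abs_of_nonneg (by linarith)]
    rw [abs_of_nonneg (by linarith)] at a0
    constructor
    · have : R z - z ≤ (1 + C) * (R w - w) := by linarith [hw.1]
      nlinarith
    · have : R (R w) - R w ≤ (1 + C) * (R z - z) := by linarith [hz.1]
      have := mul_le_mul_of_nonneg_left this (show 0 ≤ C by linarith)
      linarith [hw.2]
  · have m1 := hR.monotone h1
    have m2 := hR.monotone h2
    have m3 := hR.monotone m1
    have m4 := hR.monotone m2
    rw [abs_of_nonpos (by linarith), abs_of_nonpos (by linarith)] at hw hz
    rw [abs_of_nonpos (by linarith), abs_of_nonpos (by linarith)]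
    rw [abs_of_nonpos (by linarith)] at a0
    constructor
    · have : -(R z - z) ≤ (1 + C) * -(R w - w) := by linarith [hw.1]
      nlinarith
    · have : -(R (R w) - R w) ≤ (1 + C) * -(R z - z) := by linarith [hz.1]
      have := mul_le_mul_of_nonneg_left this (show 0 ≤ C by linarith)
      linarith [hw.2]

end abstractbounds2

/-! ## Part 4: analytic estimates -/

theorem mvt_exists {F : ℝ → ℝ} (hF : Differentiable ℝ F) {a b : ℝ} (hab : a < b) :
    ∃ ξ ∈ Set.Ioo a b, F b - F a = deriv F ξ * (b - a) := by
  obtain ⟨ξ, hξ, h⟩ := exists_deriv_eq_slope F hab hF.continuous.continuousOn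
    hF.differentiableOn
  refine ⟨ξ, hξ, ?_⟩
  rw [h, div_mul_cancel₀]
  linarith

/-- infinitesimal cross-ratio inequality from negative Schwarzian derivative -/
theorem schwarz_two {F : ℝ → ℝ} (hF : ContDiff ℝ 3 F) {a d : ℝ}
    (hpos : ∀ x ∈ Set.Icc a d, 0 < deriv F x) (hS : ∀ x ∈ Set.Icc a d, schwarzianDeriv F x < 0)
    {x y : ℝ} (hx : a ≤ x) (hxy : x < y) (hy : y ≤ d) :
    deriv F x * deriv F y * (y - x) ^ 2 ≤ (F y - F x) ^ 2 := by
  have hF1 : ContDiff ℝ 2 (deriv F) := by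
    have : ContDiff ℝ (2 + 1) F := by norm_num; exact hF
    exact (contDiff_succ_iff_deriv.mp this).2.2
  have hF2 : ContDiff ℝ 1 (deriv (deriv F)) := by
    have : ContDiff ℝ (1 + 1) (deriv F) := by norm_num; exact hF1
    exact (contDiff_succ_iff_deriv.mp this).2.2
  have dF : Differentiable ℝ F := hF.differentiable (by norm_num)
  have dF1 : Differentiable ℝ (deriv F) := hF1.differentiable (by norm_num)
  have dF2 : Differentiable ℝ (deriv (deriv F)) := hF2.differentiable (by norm_num)
  set g : ℝ → ℝ := fun t => (Real.sqrt (deriv F t))⁻¹ with hg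
  set u : ℝ → ℝ := fun t => deriv (deriv F) t / deriv F t with hu
  have hgpos : ∀ t ∈ Set.Icc a d, 0 < g t := fun t ht =>
    inv_pos.mpr (Real.sqrt_pos.mpr (hpos t ht))
  have hg2 : ∀ t ∈ Set.Icc a d, deriv F t = (g t ^ 2)⁻¹ := by
    intro t ht
    simp only [hg]
    rw [inv_pow, Real.sq_sqrt (hpos t ht).le, inv_inv]
  have hgd : ∀ t ∈ Set.Icc a d, HasDerivAt g (-(1/2) * (u t * g t)) t := by
    intro t ht
    have h0 := hpos t ht
    have hs := Real.sqrt_pos.mpr h0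
    have h1 := ((dF1 t).hasDerivAt.sqrt h0.ne').inv hs.ne'
    refine h1.congr_deriv ?_
    simp only [hu, hg]
    rw [Real.sq_sqrt h0.le]
    field_simp
  have hud : ∀ t ∈ Set.Icc a d, HasDerivAt u (deriv u t) t := by
    intro t ht
    have : DifferentiableAt ℝ u t := (dF2 t).div (dF1 t) (hpos t ht).ne'
    exact this.hasDerivAt
  have hconv : ConvexOn ℝ (Set.Icc a d) g := by
    apply convexOn_of_hasDerivWithinAt2_nonneg (convex_Icc a d)
      (f' := fun t => -(1/2) * (u t * g t))
      (f'' := fun t => -(1/2) * (deriv u t * g t + u t * (-(1/2) * (u t * g t))))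
    · intro t ht
      exact (hgd t ht).continuousAt.continuousWithinAt
    · intro t ht
      exact (hgd t (interior_subset ht)).hasDerivWithinAt
    · intro t ht
      have ht' := interior_subset ht
      exact (((hud t ht').mul (hgd t ht')).const_mul (-(1/2))).hasDerivWithinAt
    · intro t ht
      have ht' := interior_subset ht
      have h1 := hS t ht'
      have h2 := hgpos t ht'
      unfold schwarzianDeriv at h1
      change deriv u t - 1/2 * (u t)^2 < 0 at h1
      have e : -(1/2) * (deriv u t * g t + u t * (-(1/2) * (u t * g t)))
        = (1/2) * (-(deriv u t - 1/2 * (u t)^2)) * g t := by ring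
      rw [e]
      apply mul_nonneg _ h2.le
      linarith
  -- linear interpolation
  have hxI : x ∈ Set.Icc a d := ⟨hx, by linarith⟩
  have hyI : y ∈ Set.Icc a d := ⟨by linarith, hy⟩
  have hgx := hgpos x hxI
  have hgy := hgpos y hyI
  set σ := (g y - g x) / (y - x) with hσ
  set ℓ : ℝ → ℝ := fun t => g x + (t - x) * σ with hℓ
  have hℓy : ℓ y = g y := by
    simp only [hℓ, hσ]
    rw [mul_div_cancel₀ _ (by linarith : y - x ≠ 0)]; ring
  have hgl : ∀ t ∈ Set.Icc x y, g t ≤ ℓ t := by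
    intro t ht
    have hθ1 : 0 ≤ (y - t) / (y - x) := div_nonneg (by linarith [ht.2]) (by linarith)
    have hθ2 : 0 ≤ (t - x) / (y - x) := div_nonneg (by linarith [ht.1]) (by linarith)
    have hyx : y - x ≠ 0 := by linarith
    have := hconv.2 hxI hyI hθ1 hθ2 (by field_simp; ring)
    simp only [smul_eq_mul] at this
    have e : (y - t) / (y - x) * x + (t - x) / (y - x) * y = t := by field_simp; ring
    rw [e] at this
    refine this.trans (le_of_eq ?_)
    simp only [hℓ, hσ]
    field_simp
    ring
  have hsub : ∀ t ∈ Set.Icc x y, t ∈ Set.Icc a d := fun t ht =>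
    ⟨by linarith [ht.1], by linarith [ht.2]⟩
  have hℓpos : ∀ t ∈ Set.Icc x y, 0 < ℓ t := fun t ht =>
    lt_of_lt_of_le (hgpos t (hsub t ht)) (hgl t ht)
  have hmon : MonotoneOn (fun t => F t - (t - x) / (g x * ℓ t)) (Set.Icc x y) := by
    have hder : ∀ t ∈ Set.Icc x y, HasDerivAt (fun t => F t - (t - x) / (g x * ℓ t))
        (deriv F t - (ℓ t ^ 2)⁻¹) t := by
      intro t ht
      have hl0 := hℓpos t ht
      have h1 : HasDerivAt ℓ σ t := by
        have := (((hasDerivAt_id t).sub_const x).mul_const σ).const_add (g x)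
        simpa [hℓ] using this
      have h2 : HasDerivAt (fun t => (t - x) / (g x * ℓ t))
          ((1 * (g x * ℓ t) - (t - x) * (g x * σ)) / (g x * ℓ t) ^ 2) t :=
        ((hasDerivAt_id t).sub_const x).div (h1.const_mul (g x)) (by positivity)
      refine ((dF t).hasDerivAt.sub h2).congr_deriv ?_
      congr 1
      have e : 1 * (g x * ℓ t) - (t - x) * (g x * σ) = g x * g x := by
        simp only [hℓ]; ring
      rw [e]
      field_simp
    apply monotoneOn_of_deriv_nonneg (convex_Icc x y)
    · intro t ht; exact (hder t ht).continuousAt.continuousWithinAt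
    · intro t ht; exact (hder t (interior_subset ht)).differentiableAt.differentiableWithinAt
    · intro t ht
      have ht' := interior_subset ht
      rw [(hder t ht').deriv, hg2 t (hsub t ht')]
      have h1 := hgpos t (hsub t ht')
      have h2 := hgl t ht'
      have : (ℓ t ^ 2)⁻¹ ≤ (g t ^ 2)⁻¹ := by
        apply inv_anti₀ (by positivity)
        exact pow_le_pow_left₀ h1.le h2 2
      linarith
  have hfin := hmon ⟨le_rfl, hxy.le⟩ ⟨hxy.le, le_rfl⟩ hxy.le
  simp only [sub_self, zero_div, sub_zero, hℓy] at hfin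
  have hfin2 : (y - x) / (g x * g y) ≤ F y - F x := by linarith
  have h0 : 0 ≤ (y - x) / (g x * g y) := div_nonneg (by linarith) (by positivity)
  have := pow_le_pow_left₀ h0 hfin2 2
  rw [hg2 x hxI, hg2 y hyI]
  refine le_trans (le_of_eq ?_) this
  field_simp

theorem schwarz_Cr {F : ℝ → ℝ} (hF : ContDiff ℝ 3 F) (hm : StrictMono F) {a b c d : ℝ}
    (h1 : a < b) (h2 : b < c) (h3 : c < d)
    (hpos : ∀ x ∈ Set.Icc a d, 0 < deriv F x) (hS : ∀ x ∈ Set.Icc a d, schwarzianDeriv F x < 0) :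
    Cr (F a) (F b) (F c) (F d) ≤ Cr a b c d := by
  have dF : Differentiable ℝ F := hF.differentiable (by norm_num)
  have two := fun {x y : ℝ} => schwarz_two hF hpos hS (x := x) (y := y)
  -- inner monotonicity
  have hk : ∀ y ∈ Set.Icc c d, deriv F y / (F y - F b) - 1 / (y - b)
      ≤ deriv F y / (F y - F a) - 1 / (y - a) := by
    intro y hy
    have hanti : AntitoneOn (fun x => deriv F y / (F y - F x) - 1 / (y - x)) (Set.Icc a b) := by
      have hder : ∀ x ∈ Set.Icc a b, HasDerivAt (fun x => deriv F y / (F y - F x) - 1 / (y - x))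
          (deriv F x * deriv F y / (F y - F x) ^ 2 - 1 / (y - x) ^ 2) x := by
        intro x hx
        have hxy : x < y := by linarith [hx.2, hy.1]
        have p1 : 0 < F y - F x := sub_pos.mpr (hm hxy)
        have p2 : 0 < y - x := sub_pos.mpr hxy
        have e1 := (hasDerivAt_const x (deriv F y)).div
          ((hasDerivAt_const x (F y)).sub (dF x).hasDerivAt) p1.ne'
        have e2 := (hasDerivAt_const x (1:ℝ)).div
          ((hasDerivAt_const x y).sub (hasDerivAt_id x)) p2.ne'
        refine (e1.sub e2).congr_deriv ?_
        simp only [Pi.sub_apply, id]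
        congr 1
        · congr 1; ring
        · congr 1; ring
      apply antitoneOn_of_deriv_nonpos (convex_Icc a b)
      · intro x hx; exact (hder x hx).continuousAt.continuousWithinAt
      · intro x hx; exact (hder x (interior_subset hx)).differentiableAt.differentiableWithinAt
      · intro x hx
        have hx' := interior_subset hx
        rw [(hder x hx').deriv]
        have hxy : x < y := by linarith [hx'.2, hy.1]
        have p1 : 0 < F y - F x := sub_pos.mpr (hm hxy)
        have p2 : 0 < y - x := sub_pos.mpr hxy
        have := two hx'.1 hxy hy.2
        rw [sub_nonpos, div_le_div_iff₀ (by positivity) (by positivity)]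
        linarith
    exact hanti ⟨le_rfl, h1.le⟩ ⟨h1.le, le_rfl⟩ h1.le
  have hanti : AntitoneOn (fun y => Real.log (F y - F b) - Real.log (y - b)
      - (Real.log (F y - F a) - Real.log (y - a))) (Set.Icc c d) := by
    have hder : ∀ y ∈ Set.Icc c d, HasDerivAt (fun y => Real.log (F y - F b) - Real.log (y - b)
        - (Real.log (F y - F a) - Real.log (y - a)))
        ((deriv F y / (F y - F b) - 1 / (y - b)) - (deriv F y / (F y - F a) - 1 / (y - a))) y := by
      intro y hy
      have q1 : 0 < F y - F b := sub_pos.mpr (hm (by linarith [hy.1]))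
      have q2 : 0 < F y - F a := sub_pos.mpr (hm (by linarith [hy.1]))
      have q3 : 0 < y - b := by linarith [hy.1]
      have q4 : 0 < y - a := by linarith [hy.1]
      exact ((((dF y).hasDerivAt.sub_const (F b)).log q1.ne').sub
        (((hasDerivAt_id y).sub_const b).log q3.ne')).sub
        ((((dF y).hasDerivAt.sub_const (F a)).log q2.ne').sub
        (((hasDerivAt_id y).sub_const a).log q4.ne'))
    apply antitoneOn_of_deriv_nonpos (convex_Icc c d)
    · intro x hx; exact (hder x hx).continuousAt.continuousWithinAt
    · intro x hx; exact (hder x (interior_subset hx)).differentiableAt.differentiableWithinAt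
    · intro y hy
      have hy' := interior_subset hy
      rw [(hder y hy').deriv]
      have := hk y hy'
      linarith
  have hfin := hanti ⟨le_rfl, h3.le⟩ ⟨h3.le, le_rfl⟩ h3.le
  simp only at hfin
  have A1 : 0 < F d - F b := sub_pos.mpr (hm (by linarith))
  have A2 : 0 < F d - F a := sub_pos.mpr (hm (by linarith))
  have A3 : 0 < F c - F b := sub_pos.mpr (hm (by linarith))
  have A4 : 0 < F c - F a := sub_pos.mpr (hm (by linarith))
  have B1 : 0 < d - b := by linarith
  have B2 : 0 < d - a := by linarith
  have B3 : 0 < c - b := by linarith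
  have B4 : 0 < c - a := by linarith
  have hlog : Real.log ((F d - F b) * (F c - F a) * ((c - b) * (d - a)))
      ≤ Real.log ((F c - F b) * (F d - F a) * ((d - b) * (c - a))) := by
    rw [Real.log_mul (by positivity) (by positivity), Real.log_mul (by positivity) (by positivity),
      Real.log_mul (by positivity) (by positivity), Real.log_mul (by positivity) (by positivity),
      Real.log_mul (by positivity) (by positivity), Real.log_mul (by positivity) (by positivity)]
    linarith
  have hle := (Real.log_le_log_iff (by positivity) (by positivity)).mp hlog
  unfold Cr
  rw [div_le_div_iff₀ (by positivity) (by positivity)]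
  linarith


/-! ### Analysis of multicritical circle maps -/

theorem deriv_per {F : ℝ → ℝ} (h : ∀ x, F (x + 1) = F x + 1) (x : ℝ) :
    deriv F (x + 1) = deriv F x := by
  rw [← deriv_comp_add_const]
  have : (fun x => F (x + 1)) = fun x => F x + 1 := funext h
  rw [this, deriv_add_const]

theorem deriv2_per {F : ℝ → ℝ} (h : ∀ x, F (x + 1) = F x + 1) (x : ℝ) :
    deriv (deriv F) (x + 1) = deriv (deriv F) x := by
  rw [← deriv_comp_add_const]
  have : (fun x => deriv F (x + 1)) = fun x => deriv F x := funext (deriv_per h)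
  rw [this]

theorem per_int {G : ℝ → ℝ} (h : ∀ x, G (x + 1) = G x) (x : ℝ) (k : ℤ) :
    G (x + k) = G x := by
  have := (show Function.Periodic G 1 from h).int_mul k x
  simpa using this

theorem per_fract {G : ℝ → ℝ} (h : ∀ x, G (x + 1) = G x) (x : ℝ) :
    G (Int.fract x) = G x := by
  have := per_int h (Int.fract x) ⌊x⌋
  rw [Int.fract_add_floor] at this
  exact this.symm

theorem fract_mem_Icc (x : ℝ) : Int.fract x ∈ Set.Icc (0:ℝ) 1 :=
  ⟨Int.fract_nonneg x, (Int.fract_lt_one x).le⟩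

theorem per_bdd {G : ℝ → ℝ} (hc : Continuous G) (h : ∀ x, G (x + 1) = G x) :
    ∃ M, 0 < M ∧ ∀ x, |G x| ≤ M := by
  obtain ⟨M, hM⟩ := (isCompact_Icc (a := (0:ℝ)) (b := 1)).exists_bound_of_continuousOn
    hc.continuousOn
  refine ⟨|M| + 1, by positivity, fun x => ?_⟩
  have := hM _ (fract_mem_Icc x)
  rw [per_fract h, Real.norm_eq_abs] at this
  linarith [le_abs_self M]

theorem per_pos_min {G : ℝ → ℝ} (hc : Continuous G) (h : ∀ x, G (x + 1) = G x)
    (hp : ∀ x, 0 < G x) : ∃ m, 0 < m ∧ ∀ x, m ≤ G x := by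
  obtain ⟨y, hy, hm⟩ := (isCompact_Icc (a := (0:ℝ)) (b := 1)).exists_isMinOn
    ⟨0, by simp⟩ hc.continuousOn
  refine ⟨G y, hp y, fun x => ?_⟩
  have := hm (fract_mem_Icc x)
  rw [Set.mem_ofPred_eq, per_fract h] at this
  exact this

theorem mcm_diff (f : MCM) : Differentiable ℝ f.F := f.smooth.differentiable (by norm_num)

theorem mcm_dcont (f : MCM) : Continuous (deriv f.F) := f.smooth.continuous_deriv (by norm_num)

theorem mcm_d2 (f : MCM) : ContDiff ℝ 2 (deriv f.F) := by
  have := f.smooth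
  rw [show (3 : WithTop ℕ∞) = 2 + 1 by norm_num, contDiff_succ_iff_deriv] at this
  exact this.2.2

theorem mcm_d_nonneg (f : MCM) (x : ℝ) : 0 ≤ deriv f.F x := f.mono.monotone.deriv_nonneg

theorem mcm_delta (f : MCM) : ∃ δ, 0 < δ ∧ δ ≤ 1 ∧ ∀ i x, |x - f.c i| < 2 * δ → x ∈ f.W i := by
  have h : ∀ i, ∃ ε, 0 < ε ∧ Metric.ball (f.c i) ε ⊆ f.W i := fun i => by
    obtain ⟨ε, h1, h2⟩ := Metric.isOpen_iff.1 (f.W_open i) _ (f.c_mem_W i)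
    exact ⟨ε, h1, h2⟩
  choose ε h1 h2 using h
  have : Nonempty (Fin f.N) := ⟨⟨0, f.N_pos⟩⟩
  obtain ⟨i0, hi0⟩ := Finite.exists_min ε
  refine ⟨min 1 (ε i0 / 2), lt_min one_pos (half_pos (h1 i0)), min_le_left _ _, ?_⟩
  intro i x hx
  apply h2 i
  rw [Metric.mem_ball, Real.dist_eq]
  have := min_le_right 1 (ε i0 / 2)
  linarith [hi0 i]

theorem mcm_m (f : MCM) {δ : ℝ} (hδ : 0 < δ) :
    ∃ m, 0 < m ∧ ∀ x, (∀ i (k : ℤ), δ ≤ |x - f.c i - k|) → m ≤ deriv f.F x := by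
  let S : Set ℝ := Set.Icc (0:ℝ) 1 ∩ ⋂ (i) (k : ℤ), {x | δ ≤ |x - f.c i - k|}
  have hS : IsCompact S := by
    apply isCompact_Icc.inter_right
    refine isClosed_iInter fun i => isClosed_iInter fun k => ?_
    exact isClosed_le continuous_const (by fun_prop)
  have hfr : ∀ x, (∀ i (k : ℤ), δ ≤ |x - f.c i - k|) → Int.fract x ∈ S := by
    intro x hx
    refine ⟨fract_mem_Icc x, ?_⟩
    simp only [Set.mem_iInter, Set.mem_ofPred_eq]
    intro i k
    have := hx i (k + ⌊x⌋)
    push_cast at this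
    rw [show Int.fract x - f.c i - k = x - f.c i - (k + ⌊x⌋) by
      rw [Int.fract]; ring]
    exact this
  by_cases hne : S.Nonempty
  · obtain ⟨y, hy, hm⟩ := hS.exists_isMinOn hne (mcm_dcont f).continuousOn
    refine ⟨deriv f.F y, lt_of_le_of_ne (mcm_d_nonneg f y) ?_, fun x hx => ?_⟩
    · intro h0
      obtain ⟨i, k, hk⟩ := f.critOnly y h0.symm
      have h2 := hy.2
      simp only [Set.mem_iInter, Set.mem_ofPred_eq] at h2
      have := h2 i k
      rw [hk] at this
      simp at this
      linarith
    · have := hm (hfr x hx)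
      rw [Set.mem_ofPred_eq, per_fract (deriv_per f.deg1)] at this
      exact this
  · exact ⟨1, one_pos, fun x hx => absurd ⟨_, hfr x hx⟩ hne⟩

/-- local reverse Hoelder near a critical point, core computation -/
theorem rh_core {F : ℝ → ℝ} (hF : Differentiable ℝ F) (hm : StrictMono F) {c r al be s a b u v x : ℝ}
    (hal : 0 < al) (hs : 1 < s) (hr : 0 < r) (hab : a < b)
    (hau : a ≤ u) (hvb : v ≤ b) (huv : v - u = (b - a) / 4)
    (hx : deriv F x ≤ be * r ^ (s - 1))
    (hy : ∀ y ∈ Set.Ioo u v, r / 2 ≤ |y - c|)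
    (hlow : ∀ y ∈ Set.Ioo u v, al * |y - c| ^ (s - 1) ≤ deriv F y) (hbe : 0 < be) :
    deriv F x * (b - a) ≤ 4 * (be / al) * 2 ^ (s - 1) * (F b - F a) := by
  obtain ⟨ξ, hξ, he⟩ := mvt_exists hF (show u < v by linarith)
  have h1 := hlow ξ hξ
  have h2 : (r / 2) ^ (s - 1) ≤ |ξ - c| ^ (s - 1) :=
    Real.rpow_le_rpow (by positivity) (hy ξ hξ) (by linarith)
  have h3 : (r / 2) ^ (s - 1) = r ^ (s - 1) / 2 ^ (s - 1) :=
    Real.div_rpow hr.le (by norm_num) _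
  have h4 : F v - F u ≤ F b - F a := by
    linarith [hm.monotone hau, hm.monotone hvb]
  have hP : (0:ℝ) < 2 ^ (s - 1) := by positivity
  have hR : 0 < r ^ (s - 1) := by positivity
  have h5 : al * (r ^ (s - 1) / 2 ^ (s - 1)) * ((b - a) / 4) ≤ F b - F a := by
    refine le_trans ?_ h4
    rw [he, huv]
    apply mul_le_mul_of_nonneg_right _ (by linarith)
    refine le_trans ?_ h1
    rw [← h3]
    exact mul_le_mul_of_nonneg_left h2 hal.le
  calc deriv F x * (b - a) ≤ be * r ^ (s - 1) * (b - a) :=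
        mul_le_mul_of_nonneg_right hx (by linarith)
    _ = 4 * (be / al) * 2 ^ (s - 1) * (al * (r ^ (s - 1) / 2 ^ (s - 1)) * ((b - a) / 4)) := by
        field_simp
    _ ≤ _ := mul_le_mul_of_nonneg_left h5 (by positivity)

theorem rh_loc {F : ℝ → ℝ} (hF : Differentiable ℝ F) (hm : StrictMono F) {c r0 al be s : ℝ}
    (hal : 0 < al) (hbe : 0 < be) (hs : 1 < s) (hc : deriv F c = 0)
    (hpl : ∀ x, |x - c| < r0 → x ≠ c → al * |x - c| ^ (s - 1) ≤ deriv F x ∧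
      deriv F x ≤ be * |x - c| ^ (s - 1)) {a b x : ℝ} (hab : a < b)
    (ha : |a - c| < r0) (hb : |b - c| < r0) (hx : x ∈ Set.Icc a b) :
    deriv F x * (b - a) ≤ 4 * (be / al) * 2 ^ (s - 1) * (F b - F a) := by
  have hin : ∀ y ∈ Set.Icc a b, |y - c| < r0 := fun y hy => by
    rw [abs_lt] at *
    constructor <;> linarith [hy.1, hy.2]
  have hup : ∀ r, 0 < r → |x - c| ≤ r → deriv F x ≤ be * r ^ (s - 1) := by
    intro r hr h
    by_cases hxc : x = c
    · rw [hxc, hc]; positivity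
    · refine (hpl x (hin x hx) hxc).2.trans ?_
      apply mul_le_mul_of_nonneg_left _ hbe.le
      exact Real.rpow_le_rpow (abs_nonneg _) h (by linarith)
  rcases le_total (c - a) (b - c) with h | h
  · have hr : 0 < b - c := by linarith
    have hy : ∀ y ∈ Set.Ioo (b - (b - a) / 4) b, (b - c) / 2 ≤ |y - c| := fun y hy =>
      le_trans (by linarith [hy.1]) (le_abs_self _)
    refine rh_core hF hm (c := c) (u := b - (b - a) / 4) (v := b) hal hs hr hab (by linarith)
      le_rfl (by ring) (hup _ hr ?_) hy (fun y hy' => ?_) hbe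
    · rw [abs_le]; constructor <;> linarith [hx.1, hx.2]
    · refine (hpl y (hin y ⟨by linarith [hy'.1], hy'.2.le⟩) ?_).1
      intro h0
      have := hy y hy'
      rw [h0] at this; simp at this; linarith
  · have hr : 0 < c - a := by linarith
    have hy : ∀ y ∈ Set.Ioo a (a + (b - a) / 4), (c - a) / 2 ≤ |y - c| := fun y hy =>
      le_trans (by linarith [hy.2]) (neg_le_abs _)
    refine rh_core hF hm (c := c) (u := a) (v := a + (b - a) / 4) hal hs hr hab le_rfl
      (by linarith) (by ring) (hup _ hr ?_) hy (fun y hy' => ?_) hbe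
    · rw [abs_le]; constructor <;> linarith [hx.1, hx.2]
    · refine (hpl y (hin y ⟨hy'.1.le, by linarith [hy'.2]⟩) ?_).1
      intro h0
      have := hy y hy'
      rw [h0] at this; simp at this; linarith

theorem mcm_loc_or (f : MCM) (δ : ℝ) {a d : ℝ} (h : d - a < δ) :
    (∃ i, ∃ k : ℤ, ∀ y ∈ Set.Icc a d, |y - k - f.c i| < 2 * δ) ∨
      ∀ y ∈ Set.Icc a d, ∀ i (k : ℤ), δ ≤ |y - f.c i - k| := by
  by_cases hh : ∀ y ∈ Set.Icc a d, ∀ i (k : ℤ), δ ≤ |y - f.c i - k|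
  · exact Or.inr hh
  · left
    push Not at hh
    obtain ⟨y, hy, i, k, hk⟩ := hh
    refine ⟨i, k, fun z hz => ?_⟩
    rw [abs_lt] at *
    constructor <;> linarith [hy.1, hy.2, hz.1, hz.2]

theorem mcm_int (f : MCM) (x : ℝ) (k : ℤ) : f.F (x - k) = f.F x - k := by
  have := add_int_of_per f.deg1 k (x - k)
  rw [sub_add_cancel] at this
  linarith

theorem mcm_dint (f : MCM) (x : ℝ) (k : ℤ) : deriv f.F (x - k) = deriv f.F x := by
  have := per_int (deriv_per f.deg1) (x - k) k
  rw [sub_add_cancel] at this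
  exact this.symm

theorem mcm_rh (f : MCM) {δ : ℝ} (hδ : 0 < δ)
    (hW : ∀ i x, |x - f.c i| < 2 * δ → x ∈ f.W i) :
    ∃ K, 1 ≤ K ∧ ∀ a b, a < b → b ≤ a + 3 → ∀ x ∈ Set.Icc a b,
      deriv f.F x * (b - a) ≤ K * (f.F b - f.F a) := by
  obtain ⟨M, hM0, hM⟩ := per_bdd (mcm_dcont f) (deriv_per f.deg1)
  obtain ⟨m, hm0, hm⟩ := mcm_m f hδ
  obtain ⟨e, he0, he⟩ := per_pos_min (G := fun x => f.F (x + δ) - f.F x)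
    (by have := f.smooth.continuous; fun_prop)
    (fun x => by
      show f.F (x + 1 + δ) - f.F (x + 1) = f.F (x + δ) - f.F x
      rw [show x + 1 + δ = x + δ + 1 by ring, f.deg1, f.deg1]; ring)
    (fun x => by
      show 0 < f.F (x + δ) - f.F x
      linarith [f.mono (show x < x + δ by linarith)])
  obtain ⟨K1, hK1⟩ := (Set.finite_range
    (fun i => 4 * (f.be i / f.al i) * 2 ^ (f.s i - 1))).bddAbove
  refine ⟨max 1 (max K1 (max (M / m) (3 * M / e))), le_max_left _ _, ?_⟩
  intro a b hab hb3 x hx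
  have hpos : 0 < f.F b - f.F a := by linarith [f.mono hab]
  have hMx : deriv f.F x ≤ M := (le_abs_self _).trans (hM x)
  have fin : ∀ K', K' ≤ max 1 (max K1 (max (M / m) (3 * M / e))) →
      deriv f.F x * (b - a) ≤ K' * (f.F b - f.F a) →
      deriv f.F x * (b - a) ≤ max 1 (max K1 (max (M / m) (3 * M / e))) * (f.F b - f.F a) :=
    fun K' h1 h2 => h2.trans (mul_le_mul_of_nonneg_right h1 hpos.le)
  by_cases hl : b - a < δ
  · rcases mcm_loc_or f δ hl with ⟨i, k, h⟩ | h
    · apply fin (4 * (f.be i / f.al i) * 2 ^ (f.s i - 1))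
      · exact (hK1 ⟨i, rfl⟩).trans ((le_max_left _ _).trans (le_max_right _ _))
      · have hbe : 0 < f.be i := (f.al_pos i).trans (f.al_lt_be i)
        have := rh_loc (mcm_diff f) f.mono (c := f.c i) (r0 := 2 * δ) (f.al_pos i) hbe
          (f.s_gt_one i) (f.isCrit i) (fun y hy hyc =>
            ⟨(f.powerLaw i y (hW i y hy) hyc).1.le, (f.powerLaw i y (hW i y hy) hyc).2.le⟩)
          (a := a - k) (b := b - k) (x := x - k) (by linarith)
          (h a ⟨le_rfl, hab.le⟩) (h b ⟨hab.le, le_rfl⟩)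
          ⟨by linarith [hx.1], by linarith [hx.2]⟩
        rw [mcm_dint, mcm_int, mcm_int] at this
        simpa using this
    · apply fin (M / m)
      · exact (le_max_left _ _).trans ((le_max_right _ _).trans (le_max_right _ _))
      · obtain ⟨ξ, hξ, hh⟩ := mvt_exists (mcm_diff f) hab
        have := hm ξ (h ξ ⟨hξ.1.le, hξ.2.le⟩)
        rw [hh]
        have h3 : M ≤ M / m * deriv f.F ξ := by
          rw [div_mul_eq_mul_div, le_div_iff₀ hm0]
          exact mul_le_mul_of_nonneg_left this hM0.le
        rw [← mul_assoc]
        exact mul_le_mul_of_nonneg_right (hMx.trans h3) (by linarith)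
  · apply fin (3 * M / e)
    · exact (le_max_right _ _).trans ((le_max_right _ _).trans (le_max_right _ _))
    · have h1 := he a
      have h2 := f.mono.monotone (show a + δ ≤ b by linarith)
      have h3 : e ≤ f.F b - f.F a := by
        linarith
      rw [div_mul_eq_mul_div, le_div_iff₀ he0]
      have h4 : deriv f.F x * (b - a) ≤ M * 3 :=
        mul_le_mul hMx (by linarith) (by linarith) hM0.le
      calc deriv f.F x * (b - a) * e ≤ M * 3 * (f.F b - f.F a) :=
            mul_le_mul h4 h3 he0.le (by positivity)
        _ = _ := by ring

/-- the additive control function: length plus count of critical points -/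
def phiM (f : MCM) (t : ℝ) : ℝ := t + ∑ i, ((⌊t - f.c i⌋ : ℝ) + (⌈t - f.c i⌉ : ℝ))

theorem phiM_sub (f : MCM) {a d : ℝ} (h : a ≤ d) : d - a ≤ phiM f d - phiM f a := by
  unfold phiM
  have : ∑ i, ((⌊a - f.c i⌋ : ℝ) + (⌈a - f.c i⌉ : ℝ)) ≤
      ∑ i, ((⌊d - f.c i⌋ : ℝ) + (⌈d - f.c i⌉ : ℝ)) := by
    apply Finset.sum_le_sum
    intro i _
    have h1 : ⌊a - f.c i⌋ ≤ ⌊d - f.c i⌋ := Int.floor_mono (by linarith)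
    have h2 : ⌈a - f.c i⌉ ≤ ⌈d - f.c i⌉ := Int.ceil_mono (by linarith)
    have h1' : (⌊a - f.c i⌋ : ℝ) ≤ ⌊d - f.c i⌋ := by exact_mod_cast h1
    have h2' : (⌈a - f.c i⌉ : ℝ) ≤ ⌈d - f.c i⌉ := by exact_mod_cast h2
    linarith
  linarith

theorem phiM_crit (f : MCM) {a d : ℝ} (h : a < d) (i : Fin f.N) (k : ℤ)
    (h1 : a ≤ f.c i + k) (h2 : f.c i + k ≤ d) : 1 ≤ phiM f d - phiM f a := by
  unfold phiM
  have key : ∀ j, ((⌊a - f.c j⌋ : ℝ) + (⌈a - f.c j⌉ : ℝ)) + (if j = i then 1 else 0) ≤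
      ((⌊d - f.c j⌋ : ℝ) + (⌈d - f.c j⌉ : ℝ)) := by
    intro j
    have h3 : ⌊a - f.c j⌋ ≤ ⌊d - f.c j⌋ := Int.floor_mono (by linarith)
    have h4 : ⌈a - f.c j⌉ ≤ ⌈d - f.c j⌉ := Int.ceil_mono (by linarith)
    split_ifs with hj
    · subst hj
      have h5 : k ≤ ⌊d - f.c j⌋ := Int.le_floor.2 (by linarith)
      have h6 : ⌈a - f.c j⌉ ≤ k := Int.ceil_le.2 (by linarith)
      have : (⌊a - f.c j⌋ + ⌈a - f.c j⌉) + 1 ≤ ⌊d - f.c j⌋ + ⌈d - f.c j⌉ := by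
        rcases lt_or_eq_of_le h1 with h7 | h7
        · have : ⌊a - f.c j⌋ < k := Int.floor_lt.2 (by linarith)
          omega
        · have : k < ⌈d - f.c j⌉ := Int.lt_ceil.2 (by linarith)
          omega
      exact_mod_cast this
    · have : (⌊a - f.c j⌋ + ⌈a - f.c j⌉) + 0 ≤ ⌊d - f.c j⌋ + ⌈d - f.c j⌉ := by omega
      exact_mod_cast this
  have := Finset.sum_le_sum (s := Finset.univ) (fun j _ => key j)
  rw [Finset.sum_add_distrib] at this
  simp only [Finset.sum_ite_eq', Finset.mem_univ, if_true] at this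
  linarith

theorem phiM_per (f : MCM) (x : ℝ) : phiM f (x + 1) = phiM f x + (2 * f.N + 1) := by
  unfold phiM
  have : ∀ i, ((⌊x + 1 - f.c i⌋ : ℝ) + (⌈x + 1 - f.c i⌉ : ℝ)) =
      ((⌊x - f.c i⌋ : ℝ) + (⌈x - f.c i⌉ : ℝ)) + 2 := by
    intro i
    rw [show x + 1 - f.c i = x - f.c i + 1 by ring, Int.floor_add_one, Int.ceil_add_one]
    push_cast; ring
  simp only [this, Finset.sum_add_distrib, Finset.sum_const, Finset.card_univ, Fintype.card_fin,
    nsmul_eq_mul]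
  ring

/-- distortion control of the cross ratio from control of ratios of derivatives -/
theorem Cr_kappa {F : ℝ → ℝ} (hm : StrictMono F) {κ a b c d : ℝ} (hab : a < b) (hbc : b < c)
    (hcd : c < d) (hκ : 0 ≤ κ)
    (h1 : (F b - F a) * (c - a) ≤ κ * (F c - F a) * (b - a))
    (h2 : (F d - F c) * (d - b) ≤ κ * (F d - F b) * (d - c)) :
    Cr (F a) (F b) (F c) (F d) ≤ κ ^ 2 * Cr a b c d := by
  have e1 := hm hab
  have e2 := hm hbc
  have e3 := hm hcd
  unfold Cr
  rw [← mul_div_assoc, div_le_div_iff₀ (mul_pos (by linarith) (by linarith))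
    (mul_pos (by linarith) (by linarith))]
  have := mul_le_mul h1 h2 (mul_nonneg (by linarith) (by linarith))
    (mul_nonneg (mul_nonneg hκ (by linarith)) (by linarith))
  nlinarith [this]

theorem Cr_kappa' {F : ℝ → ℝ} (hF : Differentiable ℝ F) (hm : StrictMono F) {κ a b c d : ℝ}
    (hab : a < b) (hbc : b < c) (hcd : c < d) (hκ : 0 ≤ κ)
    (h : ∀ u v, a ≤ u → u < v → v ≤ d → ∀ x ∈ Set.Icc u v, deriv F x * (v - u) ≤ κ * (F v - F u)) :
    Cr (F a) (F b) (F c) (F d) ≤ κ ^ 2 * Cr a b c d := by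
  apply Cr_kappa hm hab hbc hcd hκ
  · obtain ⟨ξ, hξ, he⟩ := mvt_exists hF hab
    have := h a c le_rfl (by linarith) hcd.le ξ ⟨hξ.1.le, by linarith [hξ.2]⟩
    rw [he]
    nlinarith [mul_le_mul_of_nonneg_right this (show 0 ≤ b - a by linarith)]
  · obtain ⟨ξ, hξ, he⟩ := mvt_exists hF hcd
    have := h b d hab.le (by linarith) le_rfl ξ ⟨by linarith [hξ.1], hξ.2.le⟩
    rw [he]
    nlinarith [mul_le_mul_of_nonneg_right this (show 0 ≤ d - c by linarith)]

theorem Cr_sub_const (a b c d k : ℝ) : Cr (a - k) (b - k) (c - k) (d - k) = Cr a b c d := by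
  unfold Cr; congr 1 <;> ring

theorem Cr_nonneg' {a b c d : ℝ} (hab : a < b) (hbc : b < c) (hcd : c < d) : 0 ≤ Cr a b c d :=
  div_nonneg (mul_nonneg (by linarith) (by linarith)) (mul_nonneg (by linarith) (by linarith))

theorem mcm_ana (f : MCM) : ∃ A, Ana f.F (phiM f) A (2 * f.N + 1) := by
  obtain ⟨δ, hδ, hδ1, hW⟩ := mcm_delta f
  obtain ⟨K, hK1, hK⟩ := mcm_rh f hδ hW
  obtain ⟨m, hm0, hm⟩ := mcm_m f hδ
  obtain ⟨M, hM0, hM⟩ := per_bdd ((mcm_d2 f).continuous_deriv (by norm_num)) (deriv2_per f.deg1)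
  have hlogK : 0 ≤ Real.log K := Real.log_nonneg hK1
  have hL0 : 0 < M / m := div_pos hM0 hm0
  have hA0 : 0 ≤ 2 * Real.log K / δ + 2 * (M / m) := by positivity
  refine ⟨2 * Real.log K / δ + 2 * (M / m), f.smooth.continuous, f.mono, f.deg1, hA0,
    fun a d h => by linarith [phiM_sub f h], phiM_per f, ?_⟩
  intro a b c d hab hbc hcd had
  have hCr := Cr_nonneg' hab hbc hcd
  have hda : a < d := by linarith
  have case1 : δ ≤ phiM f d - phiM f a → Cr (f.F a) (f.F b) (f.F c) (f.F d) ≤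
      Real.exp ((2 * Real.log K / δ + 2 * (M / m)) * (phiM f d - phiM f a)) * Cr a b c d := by
    intro hd
    have h1 := Cr_kappa' (mcm_diff f) f.mono hab hbc hcd (show 0 ≤ K by linarith)
      (fun u v h1 h2 h3 => hK u v h2 (by linarith))
    refine h1.trans (mul_le_mul_of_nonneg_right ?_ hCr)
    have : K ^ 2 = Real.exp (2 * Real.log K) := by
      rw [two_mul, Real.exp_add, Real.exp_log (by linarith)]; ring
    rw [this, Real.exp_le_exp]
    calc 2 * Real.log K = 2 * Real.log K / δ * δ := by field_simp
      _ ≤ (2 * Real.log K / δ + 2 * (M / m)) * (phiM f d - phiM f a) :=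
        mul_le_mul (by linarith) hd hδ.le hA0
  by_cases hl : d - a < δ
  · by_cases hcr : ∃ i, ∃ k : ℤ, a ≤ f.c i + k ∧ f.c i + k ≤ d
    · obtain ⟨i, k, h1, h2⟩ := hcr
      exact case1 (hδ1.trans (phiM_crit f hda i k h1 h2))
    · rcases mcm_loc_or f δ hl with ⟨i, k, h⟩ | h
      · have hne : ∀ x ∈ Set.Icc (a - k) (d - k), x ≠ f.c i := by
          intro x hx he
          exact hcr ⟨i, k, by linarith [hx.1], by linarith [hx.2]⟩
        have hin : ∀ x ∈ Set.Icc (a - k) (d - k), x ∈ f.W i := by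
          intro x hx
          apply hW
          have := h (x + k) ⟨by linarith [hx.1], by linarith [hx.2]⟩
          simpa using this
        have h1 := schwarz_Cr f.smooth f.mono (a := a - k) (b := b - k) (c := c - k) (d := d - k)
          (by linarith) (by linarith) (by linarith)
          (fun x hx => lt_of_le_of_lt (mul_nonneg (f.al_pos i).le (by positivity))
            (f.powerLaw i x (hin x hx) (hne x hx)).1)
          (fun x hx => f.negSchwarzian i x (hin x hx) (hne x hx))
        rw [mcm_int, mcm_int, mcm_int, mcm_int, Cr_sub_const, Cr_sub_const] at h1
        refine h1.trans (le_mul_of_one_le_left hCr ?_)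
        rw [Real.one_le_exp_iff]
        exact mul_nonneg hA0 (by linarith [phiM_sub f hda.le])
      · have hlip : ∀ x ∈ Set.Icc a d, ∀ y ∈ Set.Icc a d,
            deriv f.F x ≤ Real.exp (M / m * (d - a)) * deriv f.F y := by
          intro x hx y hy
          have h1 := Convex.norm_image_sub_le_of_norm_deriv_le (f := deriv f.F) (C := M)
            (s := Set.univ) (x := y) (y := x)
            (fun z _ => (mcm_d2 f).differentiable (by norm_num) z)
            (fun z _ => hM z) convex_univ (Set.mem_univ _) (Set.mem_univ _)
          rw [Real.norm_eq_abs, Real.norm_eq_abs] at h1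
          have h2 : |x - y| ≤ d - a := by
            rw [abs_le]; constructor <;> linarith [hx.1, hx.2, hy.1, hy.2]
          have h3 := hm y (h y hy)
          have h4 : M * |x - y| ≤ M / m * (d - a) * deriv f.F y := by
            calc M * |x - y| ≤ M * (d - a) := mul_le_mul_of_nonneg_left h2 hM0.le
              _ = M / m * (d - a) * m := by field_simp
              _ ≤ _ := mul_le_mul_of_nonneg_left h3 (mul_nonneg hL0.le (by linarith))
          have h5 := Real.add_one_le_exp (M / m * (d - a))
          have h6 := mul_le_mul_of_nonneg_right h5 (mcm_d_nonneg f y)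
          linarith [le_abs_self (deriv f.F x - deriv f.F y)]
        have h1 := Cr_kappa' (mcm_diff f) f.mono hab hbc hcd
          (Real.exp_pos (M / m * (d - a))).le (fun u v h1 h2 h3 x hx => by
            obtain ⟨ξ, hξ, he⟩ := mvt_exists (mcm_diff f) h2
            rw [he, ← mul_assoc]
            apply mul_le_mul_of_nonneg_right _ (by linarith)
            exact hlip x ⟨by linarith [hx.1], by linarith [hx.2]⟩ ξ
              ⟨by linarith [hξ.1], by linarith [hξ.2]⟩)
        refine h1.trans (mul_le_mul_of_nonneg_right ?_ hCr)
        rw [← Real.exp_nat_mul, Real.exp_le_exp]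
        push_cast
        have h7 := phiM_sub f hda.le
        calc 2 * (M / m * (d - a)) = 2 * (M / m) * (d - a) := by ring
          _ ≤ _ := mul_le_mul (le_add_of_nonneg_left (by positivity)) h7 (by linarith) hA0
  · exact case1 (by linarith [phiM_sub f hda.le])

theorem pow_one_side {G : ℝ → ℝ} (hG : Differentiable ℝ G) (hm : StrictMono G) (h0 : G 0 = 0)
    (h1 : G 1 = 1) {δ al be s : ℝ} (hδ : 0 < δ) (hδ1 : δ ≤ 1) (hal : 0 < al) (hbe : 0 < be)
    (hs : 1 < s) (hd : ∀ t, 0 < t → t < 2 * δ → al * t ^ (s - 1) ≤ deriv G t ∧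
      deriv G t ≤ be * t ^ (s - 1)) (t : ℝ) (ht : 0 < t) (ht1 : t ≤ 1) :
    G t ≤ (be + δ⁻¹ ^ s + al⁻¹ * (2 / δ) ^ s) * t ^ s ∧
      t ^ s ≤ (be + δ⁻¹ ^ s + al⁻¹ * (2 / δ) ^ s) * G t := by
  have hts : 0 < t ^ s := by positivity
  have p1 : 0 < δ⁻¹ ^ s := by positivity
  have p2 : 0 < al⁻¹ * (2 / δ) ^ s := by positivity
  have hGt : 0 < G t := by rw [← h0]; exact hm ht
  constructor
  · by_cases htd : t ≤ δ
    · obtain ⟨ξ, hξ, he⟩ := mvt_exists hG ht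
      rw [h0, sub_zero, sub_zero] at he
      have h2 := (hd ξ hξ.1 (by linarith [hξ.2])).2
      have h3 : ξ ^ (s - 1) ≤ t ^ (s - 1) := Real.rpow_le_rpow hξ.1.le hξ.2.le (by linarith)
      have h4 : t ^ (s - 1) * t = t ^ s := by
        rw [Real.rpow_sub_one ht.ne']; field_simp
      calc G t = deriv G ξ * t := he
        _ ≤ be * t ^ (s - 1) * t := mul_le_mul_of_nonneg_right
          (h2.trans (mul_le_mul_of_nonneg_left h3 hbe.le)) ht.le
        _ = be * t ^ s := by rw [mul_assoc, h4]
        _ ≤ _ := mul_le_mul_of_nonneg_right (by linarith) hts.le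
    · have h2 : G t ≤ 1 := by rw [← h1]; exact hm.monotone ht1
      have h3 : 1 ≤ δ⁻¹ ^ s * t ^ s := by
        rw [← Real.mul_rpow (by positivity) ht.le]
        apply Real.one_le_rpow _ (by linarith)
        rw [inv_mul_eq_div, le_div_iff₀ hδ]; linarith
      have h4 : δ⁻¹ ^ s * t ^ s ≤ (be + δ⁻¹ ^ s + al⁻¹ * (2 / δ) ^ s) * t ^ s :=
        mul_le_mul_of_nonneg_right (by linarith) hts.le
      linarith
  · have hdt : 0 < δ * t := by positivity
    have hu : δ * t ≤ δ := by nlinarith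
    obtain ⟨ξ, hξ, he⟩ := mvt_exists hG (show δ * t / 2 < δ * t by linarith)
    have h2 := (hd ξ (by linarith [hξ.1]) (by linarith [hξ.2])).1
    have h3 : (δ * t / 2) ^ (s - 1) ≤ ξ ^ (s - 1) :=
      Real.rpow_le_rpow (by positivity) hξ.1.le (by linarith)
    have h4 : (δ * t / 2) ^ (s - 1) * (δ * t / 2) = (δ * t / 2) ^ s := by
      rw [Real.rpow_sub_one (by positivity)]; field_simp
    have h5 : al * (δ * t / 2) ^ s ≤ G t := by
      have h6 : 0 < G (δ * t / 2) := by rw [← h0]; exact hm (by positivity)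
      have h7 : G (δ * t) ≤ G t := hm.monotone (by nlinarith)
      have h8 : al * (δ * t / 2) ^ s ≤ G (δ * t) - G (δ * t / 2) := by
        rw [he, ← h4, ← mul_assoc, show δ * t - δ * t / 2 = δ * t / 2 by ring]
        exact mul_le_mul_of_nonneg_right
          ((mul_le_mul_of_nonneg_left h3 hal.le).trans h2) (by positivity)
      linarith
    have h6 : t ^ s = al⁻¹ * (2 / δ) ^ s * (al * (δ * t / 2) ^ s) := by
      have : t = 2 / δ * (δ * t / 2) := by field_simp
      have h7 : t ^ s = (2 / δ) ^ s * (δ * t / 2) ^ s := by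
        rw [← Real.mul_rpow (by positivity) (by positivity), ← this]
      rw [h7]; field_simp
    calc t ^ s = al⁻¹ * (2 / δ) ^ s * (al * (δ * t / 2) ^ s) := h6
      _ ≤ al⁻¹ * (2 / δ) ^ s * G t := mul_le_mul_of_nonneg_left h5 p2.le
      _ ≤ _ := mul_le_mul_of_nonneg_right (by linarith) hGt.le

theorem mcm_powL (f : MCM) (i : Fin f.N) : ∃ K, 0 < K ∧ PowL f.F (f.c i) K (f.s i) := by
  obtain ⟨δ, hδ, hδ1, hW⟩ := mcm_delta f
  have hbe : 0 < f.be i := (f.al_pos i).trans (f.al_lt_be i)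
  have hal := f.al_pos i
  refine ⟨f.be i + δ⁻¹ ^ f.s i + (f.al i)⁻¹ * (2 / δ) ^ f.s i, by positivity, ?_⟩
  have hd := mcm_diff f
  intro t ht ht1
  constructor
  · refine pow_one_side (G := fun t => f.F (f.c i) - f.F (f.c i - t))
      (by fun_prop) (fun x y h => ?_) (by simp) ?_ hδ hδ1 hal hbe (f.s_gt_one i) ?_ t ht ht1
    · have := f.mono (show f.c i - y < f.c i - x by linarith)
      simp only; linarith
    · have := f.deg1 (f.c i - 1)
      rw [sub_add_cancel] at this
      linarith
    · intro u hu hu2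
      have h1 : deriv (fun t => f.F (f.c i) - f.F (f.c i - t)) u = deriv f.F (f.c i - u) := by
        rw [deriv_const_sub, deriv_comp_const_sub, neg_neg]
      rw [h1]
      have h2 : |f.c i - u - f.c i| = u := by
        rw [show f.c i - u - f.c i = -u by ring, abs_neg, abs_of_pos hu]
      have := f.powerLaw i (f.c i - u) (hW i _ (by rw [h2]; exact hu2)) (by linarith)
      rw [h2] at this
      exact ⟨this.1.le, this.2.le⟩
  · refine pow_one_side (G := fun t => f.F (f.c i + t) - f.F (f.c i))
      (by fun_prop) (fun x y h => ?_) (by simp) ?_ hδ hδ1 hal hbe (f.s_gt_one i) ?_ t ht ht1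
    · have := f.mono (show f.c i + x < f.c i + y by linarith)
      simp only; linarith
    · have := f.deg1 (f.c i)
      linarith
    · intro u hu hu2
      have h1 : deriv (fun t => f.F (f.c i + t) - f.F (f.c i)) u = deriv f.F (f.c i + u) := by
        rw [deriv_sub_const, deriv_comp_const_add]
      rw [h1]
      have h2 : |f.c i + u - f.c i| = u := by
        rw [show f.c i + u - f.c i = u by ring, abs_of_pos hu]
      have := f.powerLaw i (f.c i + u) (hW i _ (by rw [h2]; exact hu2)) (by linarith)
      rw [h2] at this
      exact ⟨this.1.le, this.2.le⟩

/-! ### Combinatorics of the orbits -/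

theorem comb_of_rot {G : ℝ → ℝ} (hmono : StrictMono G) (hdeg : ∀ x, G (x + 1) = G x + 1)
    {σ : ℝ} (hirr : Irrational σ) (hrot : HasRotationNumber G σ) {q q' : ℕ} {p p' : ℤ}
    (hq : 0 < q) (hqq : q ≤ q') (h0 : 0 < q * σ - p) (h1 : q * σ - p < 1)
    (h2 : q' * σ - p' < 0) (h3 : 0 < q * σ - p + (q' * σ - p'))
    (hb : ∀ k : ℕ, 0 < k → k < q' → ∀ m : ℤ, q * σ - p ≤ |(k : ℝ) * σ + m|) :
    Comb G q q' p p' := by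
  have O := orbit_lt G hmono hdeg σ hrot
  have hne : ∀ (i j : ℕ) (m : ℤ), (i : ℝ) * σ + m = j * σ → i = j := by
    intro i j m h
    by_contra hij
    have hd : ((i : ℝ) - j) ≠ 0 := sub_ne_zero.2 (by exact_mod_cast hij)
    apply hirr
    refine ⟨-m / ((i : ℚ) - j), ?_⟩
    push_cast
    rw [div_eq_iff hd]
    linarith
  refine ⟨hq, hqq, fun x => ?_, fun x => ?_, fun x => ?_, fun x => ?_, ?_⟩
  · have := O 0 q p (by push_cast; linarith) x
    simp only [Function.iterate_zero, id] at this
    unfold Rm; linarith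
  · have := O q 0 (-p - 1) (by push_cast; linarith) x
    simp only [Function.iterate_zero, id] at this
    push_cast at this
    unfold Rm; linarith
  · have := O q' 0 (-p') (by push_cast; linarith) x
    simp only [Function.iterate_zero, id] at this
    push_cast at this
    unfold Rm; linarith
  · have := O 0 (q + q') (p + p') (by push_cast; linarith) x
    simp only [Function.iterate_zero, id] at this
    push_cast at this
    unfold Rm
    rw [iter_sub_int hdeg, ← Function.iterate_add_apply]
    linarith
  · intro k hk hk' m x
    rcases le_abs.1 (hb k hk hk' m) with h | h
    · left
      rcases lt_or_eq_of_le h with h | h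
      · have := O q k (-p - m) (by push_cast; linarith) x
        push_cast at this
        unfold Rm; linarith
      · have hqk := hne q k (-p - m) (by push_cast; linarith)
        subst hqk
        unfold Rm
        have : (m : ℝ) = -p := by linarith
        rw [this]; linarith
    · right
      rcases lt_or_eq_of_le h with h | h
      · have := O (q + k) 0 (m - p) (by push_cast; linarith) x
        simp only [Function.iterate_zero, id] at this
        push_cast at this
        unfold Rm
        rw [← Function.iterate_add_apply]
        linarith
      · have := hne (q + k) 0 (m - p) (by push_cast; linarith)
        omega

theorem refl_rot {F : ℝ → ℝ} {ρ : ℝ} (h : HasRotationNumber F ρ) :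
    HasRotationNumber (reflF F) (-ρ) := by
  unfold HasRotationNumber at *
  have : (fun n : ℕ => (reflF F)^[n] 0 / (n : ℝ)) = fun n : ℕ => -(F^[n] 0 / n) := by
    funext n
    rw [reflF_iter, neg_zero, neg_div]
  rw [this]
  exact h.neg

theorem comb_even (f : MCM) (ρ : ℝ) (hirr : Irrational ρ) (hmem : ρ ∈ Set.Ioo (0 : ℝ) 1)
    (hrot : HasRotationNumber f.F ρ) (n : ℕ) (hn : Even n) :
    Comb f.F (qDen ρ n) (qDen ρ (n + 1)) (pNum ρ n) (pNum ρ (n + 1)) := by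
  have s1 := theta_sign ρ hirr hmem n
  have s2 := theta_sign ρ hirr hmem (n + 1)
  have s3 := theta_dom ρ hirr hmem n
  have hb := best_approx ρ hirr hmem n
  have hq := qDen_pos ρ hirr hmem n
  rw [pow_succ] at s2
  simp only [hn.neg_one_pow, one_mul] at s1 s2 s3 hb
  unfold theta at s1 s2 s3 hb
  refine comb_of_rot f.mono f.deg1 hirr hrot hq.1 hq.2 ?_ ?_ ?_ ?_ ?_ <;> push_cast
  · linarith
  · linarith
  · linarith
  · linarith
  · intro k h1 h2 m
    exact hb k h1 h2 m

theorem comb_odd (f : MCM) (ρ : ℝ) (hirr : Irrational ρ) (hmem : ρ ∈ Set.Ioo (0 : ℝ) 1)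
    (hrot : HasRotationNumber f.F ρ) (n : ℕ) (hn : Odd n) :
    Comb (reflF f.F) (qDen ρ n) (qDen ρ (n + 1)) (-(pNum ρ n : ℤ)) (-(pNum ρ (n + 1) : ℤ)) := by
  have s1 := theta_sign ρ hirr hmem n
  have s2 := theta_sign ρ hirr hmem (n + 1)
  have s3 := theta_dom ρ hirr hmem n
  have hb := best_approx ρ hirr hmem n
  have hq := qDen_pos ρ hirr hmem n
  rw [pow_succ] at s2
  simp only [hn.neg_one_pow] at s1 s2 s3 hb
  unfold theta at s1 s2 s3 hb
  have hmono : StrictMono (reflF f.F) := fun x y h => by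
    unfold reflF
    linarith [f.mono (show -y < -x by linarith)]
  have hdeg : ∀ x, reflF f.F (x + 1) = reflF f.F x + 1 := fun x => by
    unfold reflF
    have := f.deg1 (-(x + 1))
    rw [show -(x + 1) + 1 = -x by ring] at this
    linarith
  refine comb_of_rot hmono hdeg hirr.neg (refl_rot hrot) hq.1 hq.2 ?_ ?_ ?_ ?_ ?_ <;> push_cast
  · linarith
  · linarith
  · linarith
  · linarith
  · intro k h1 h2 m
    have := hb k h1 h2 (-m)
    rw [show (k : ℝ) * -ρ + m = -((k : ℝ) * ρ + ((-m : ℤ) : ℝ)) by push_cast; ring, abs_neg]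
    linarith

theorem combE_mcm (f : MCM) (ρ : ℝ) (hirr : Irrational ρ) (hmem : ρ ∈ Set.Ioo (0 : ℝ) 1)
    (hrot : HasRotationNumber f.F ρ) (n : ℕ) :
    CombE f.F (qDen ρ n) (qDen ρ (n + 1)) (pNum ρ n) (pNum ρ (n + 1)) := by
  rcases Nat.even_or_odd n with h | h
  · exact Or.inl (comb_even f ρ hirr hmem hrot n h)
  · exact Or.inr (comb_odd f ρ hirr hmem hrot n h)

/-- The sign pattern of three consecutive return maps. -/
theorem signs_mcm (f : MCM) (ρ : ℝ) (hirr : Irrational ρ) (hmem : ρ ∈ Set.Ioo (0 : ℝ) 1)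
    (hrot : HasRotationNumber f.F ρ) (n : ℕ) :
    ((∀ x, Rm f.F (qDen ρ (n + 1)) (pNum ρ (n + 1)) x < x) ∧
      (∀ x, x < Rm f.F (qDen ρ (n + 2)) (pNum ρ (n + 2)) x)) ∨
    ((∀ x, x < Rm f.F (qDen ρ (n + 1)) (pNum ρ (n + 1)) x) ∧
      (∀ x, Rm f.F (qDen ρ (n + 2)) (pNum ρ (n + 2)) x < x)) := by
  rcases Nat.even_or_odd n with h | h
  · left
    refine ⟨(comb_even f ρ hirr hmem hrot n h).dn, fun x => ?_⟩
    have := (comb_odd f ρ hirr hmem hrot (n + 1) h.add_one).dn (-x)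
    rw [reflF_Rm, neg_neg] at this
    linarith
  · right
    refine ⟨fun x => ?_, (comb_even f ρ hirr hmem hrot (n + 1) h.add_one).dn⟩
    have := (comb_odd f ρ hirr hmem hrot n h).dn (-x)
    rw [reflF_Rm, neg_neg] at this
    linarith

theorem Rm_iter {F : ℝ → ℝ} (h : ∀ x, F (x + 1) = F x + 1) (q : ℕ) (p : ℤ) (k : ℕ) (x : ℝ) :
    (Rm F q p)^[k] x = F^[k * q] x - k * p := by
  induction k with
  | zero => simp
  | succ k ih =>
    rw [Function.iterate_succ_apply', ih, Rm]
    have := iter_sub_int h q (k * p) (F^[k * q] x)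
    push_cast at this
    rw [this, ← Function.iterate_add_apply, show q + k * q = (k + 1) * q by ring]
    push_cast; ring

theorem iter_anti {R : ℝ → ℝ} (h : ∀ x, R x < x) (y : ℝ) {k l : ℕ} (hkl : k ≤ l) :
    R^[l] y ≤ R^[k] y := by
  induction l, hkl using Nat.le_induction with
  | base => exact le_rfl
  | succ l _ ih => rw [Function.iterate_succ_apply']; exact (h _).le.trans ih

theorem iter_mono {R : ℝ → ℝ} (h : ∀ x, x < R x) (y : ℝ) {k l : ℕ} (hkl : k ≤ l) :
    R^[k] y ≤ R^[l] y := by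
  induction l, hkl using Nat.le_induction with
  | base => exact le_rfl
  | succ l _ ih => rw [Function.iterate_succ_apply']; exact ih.trans (h _).le

theorem ordered {R R' R'' : ℝ → ℝ} {a : ℕ}
    (hs : ((∀ x, R' x < x) ∧ (∀ x, x < R'' x)) ∨ ((∀ x, x < R' x) ∧ (∀ x, R'' x < x)))
    (ha : ∀ x, R'' x = R'^[a] (R x)) (w : ℝ) {k l : ℕ} (hkl : k + 1 ≤ l) (hl : l ≤ a) :
    Btwn w (R'^[k] (R w)) (R w) ∧ Btwn w (R'^[l] (R w)) (R w) ∧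
      |R'^[k + 1] (R w) - R'^[k] (R w)| ≤ |R'^[l] (R w) - R'^[k] (R w)| ∧
      |R'^[l] (R w) - R'^[k] (R w)| ≤ |R w - w| := by
  rcases hs with ⟨h1, h2⟩ | ⟨h1, h2⟩
  · have e0 := h2 w
    rw [ha] at e0
    have e1 := iter_anti h1 (R w) hl
    have e2 := iter_anti h1 (R w) hkl
    have e3 := iter_anti h1 (R w) (Nat.le_succ k)
    have e4 := iter_anti h1 (R w) (Nat.zero_le k)
    simp only [Function.iterate_zero, id] at e4
    simp only [Nat.succ_eq_add_one] at e3
    refine ⟨Or.inl ⟨by linarith, by linarith⟩, Or.inl ⟨by linarith, by linarith⟩, ?_, ?_⟩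
    · rw [abs_of_nonpos (by linarith), abs_of_nonpos (by linarith)]; linarith
    · rw [abs_of_nonpos (by linarith), abs_of_nonneg (by linarith)]; linarith
  · have e0 := h2 w
    rw [ha] at e0
    have e1 := iter_mono h1 (R w) hl
    have e2 := iter_mono h1 (R w) hkl
    have e3 := iter_mono h1 (R w) (Nat.le_succ k)
    have e4 := iter_mono h1 (R w) (Nat.zero_le k)
    simp only [Function.iterate_zero, id] at e4
    simp only [Nat.succ_eq_add_one] at e3
    refine ⟨Or.inr ⟨by linarith, by linarith⟩, Or.inr ⟨by linarith, by linarith⟩, ?_, ?_⟩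
    · rw [abs_of_nonneg (by linarith), abs_of_nonneg (by linarith)]; linarith
    · rw [abs_of_nonneg (by linarith), abs_of_nonpos (by linarith)]; linarith

/-! ### Transport of the comparability `|I_n(w)| ≍ |I_{n+1}(w)|` -/

/-- Data at one renormalization level. -/
structure Lev (F Φ : ℝ → ℝ) (A D C : ℝ) (q q' : ℕ) (p p' : ℤ) : Prop where
  ana : Ana F Φ A D
  comb : CombE F q q' p p'
  hC : 1 ≤ C
  hD : 0 ≤ D
  E : Esym (Rm F q p) C
  E' : Esym (Rm F q' p') C
  hqq : q ≤ q'

def Good (F : ℝ → ℝ) (q q' : ℕ) (p p' : ℤ) (κ w : ℝ) : Prop :=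
  κ * |Rm F q p w - w| ≤ |Rm F q' p' w - w|

/-- the loss constant -/
def tauC (A D C : ℝ) : ℝ :=
  (C * (1 + C)) ^ 3 * (2 * (1 + C) * Real.exp (A * (3 * D)))

theorem Good.mono {F : ℝ → ℝ} {q q' : ℕ} {p p' : ℤ} {κ κ' w : ℝ} (h : Good F q q' p p' κ w)
    (hk : κ' ≤ κ) : Good F q q' p p' κ' w :=
  (mul_le_mul_of_nonneg_right hk (abs_nonneg _)).trans h

theorem Rm_len_int {F : ℝ → ℝ} (h : ∀ x, F (x + 1) = F x + 1) (q : ℕ) (p m : ℤ) (x : ℝ) :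
    |Rm F q p (x + m) - (x + m)| = |Rm F q p x - x| := by
  rw [Rm_add_int h]; congr 1; ring

theorem Btwn.trans' {a z w b : ℝ} (h1 : Btwn a z w) (h2 : Btwn a w b) : Btwn a z b := by
  unfold Btwn at *
  rcases h1 with h1 | h1 <;> rcases h2 with h2 | h2
  · left; constructor <;> linarith
  · right; constructor <;> linarith
  · left; constructor <;> linarith
  · right; constructor <;> linarith

section
variable {F Φ : ℝ → ℝ} {A D C : ℝ} {q q' : ℕ} {p p' : ℤ}

theorem Lev.c2 (L : Lev F Φ A D C q q' p p') : 1 ≤ C * (1 + C) := by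
  have := L.hC; nlinarith

theorem Lev.e0 (L : Lev F Φ A D C q q' p p') : 1 ≤ 2 * (1 + C) * Real.exp (A * (3 * D)) := by
  have h1 := L.hC
  have h2 : 1 ≤ Real.exp (A * (3 * D)) := by
    rw [Real.one_le_exp_iff]
    exact mul_nonneg L.ana.A0 (by linarith [L.hD])
  nlinarith

theorem Lev.tau (L : Lev F Φ A D C q q' p p') : 1 ≤ tauC A D C := by
  unfold tauC
  have h1 := one_le_pow₀ L.c2 (n := 3)
  have h2 := L.e0
  nlinarith

theorem Good.int (L : Lev F Φ A D C q q' p p') {κ w : ℝ} (m : ℤ) :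
    Good F q q' p p' κ (w + m) ↔ Good F q q' p p' κ w := by
  unfold Good
  rw [Rm_len_int L.ana.deg1, Rm_len_int L.ana.deg1]

theorem Lev.near (L : Lev F Φ A D C q q' p p') {w z : ℝ} (h : Btwn w z (Rm F q p w)) :
    |Rm F q p z - z| ≤ C * (1 + C) * |Rm F q p w - w| ∧
      |Rm F q p w - w| ≤ C * (1 + C) * |Rm F q p z - z| :=
  Ecomp (Rm_strictMono L.ana.mono q p) L.hC L.E h

theorem Lev.near' (L : Lev F Φ A D C q q' p p') {w z : ℝ} (h : Btwn w z (Rm F q' p' w)) :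
    |Rm F q' p' z - z| ≤ C * (1 + C) * |Rm F q' p' w - w| ∧
      |Rm F q' p' w - w| ≤ C * (1 + C) * |Rm F q' p' z - z| :=
  Ecomp (Rm_strictMono L.ana.mono q' p') L.hC L.E' h

theorem Lev.up (L : Lev F Φ A D C q q' p p') (w : ℝ) :
    |Rm F q' p' w - w| ≤ C * (1 + C) * |Rm F q p w - w| := by
  have h := L.comb.btw w
  have h1 := h.abs_le
  rw [abs_sub_comm] at h1
  exact h1.trans (L.near h).2

theorem Lev.shift (L : Lev F Φ A D C q q' p p') (w : ℝ) :
    |Rm F q p w - w| ≤ C * (1 + C) * |Rm F q p (Rm F q' p' w) - Rm F q' p' w| ∧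
    |Rm F q p (Rm F q' p' w) - Rm F q' p' w| ≤ C * (1 + C) * |Rm F q p w - w| :=
  L.near (L.comb.btw w)

theorem Lev.mid (L : Lev F Φ A D C q q' p p') {w z : ℝ} (h : Btwn w z (Rm F q' p' w)) :
    |Rm F q p w - w| ≤ (C * (1 + C)) ^ 2 * |Rm F q p z - z| ∧
    |Rm F q p z - z| ≤ (C * (1 + C)) ^ 2 * |Rm F q p w - w| := by
  have h1 := L.near (h.symm.trans' (L.comb.btw w))
  have h2 := L.shift w
  have h0 := L.c2
  have h0' : 0 ≤ C * (1 + C) := by linarith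
  constructor
  · rw [sq, mul_assoc]
    exact h2.1.trans (mul_le_mul_of_nonneg_left h1.2 h0')
  · rw [sq, mul_assoc]
    exact h1.1.trans (mul_le_mul_of_nonneg_left h2.2 h0')

theorem Lev.goodC (L : Lev F Φ A D C q q' p p') {κ w z : ℝ} (hκ : 0 ≤ κ)
    (h : Btwn w z (Rm F q' p' w)) (hg : Good F q q' p p' κ z) :
    Good F q q' p p' (κ / (C * (1 + C)) ^ 3) w := by
  have h0 := L.c2
  have hp : 0 < C * (1 + C) := by linarith
  have h1 := L.mid h
  have h2 := L.near' h
  unfold Good at *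
  rw [div_mul_eq_mul_div, div_le_iff₀ (by positivity)]
  calc κ * |Rm F q p w - w| ≤ κ * ((C * (1 + C)) ^ 2 * |Rm F q p z - z|) :=
        mul_le_mul_of_nonneg_left h1.1 hκ
    _ = (C * (1 + C)) ^ 2 * (κ * |Rm F q p z - z|) := by ring
    _ ≤ (C * (1 + C)) ^ 2 * (C * (1 + C) * |Rm F q' p' w - w|) :=
        mul_le_mul_of_nonneg_left (hg.trans h2.1) (by positivity)
    _ = _ := by ring

theorem Lev.goodC' (L : Lev F Φ A D C q q' p p') {κ w z : ℝ} (hκ : 0 ≤ κ)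
    (h : Btwn w z (Rm F q' p' w)) (hg : Good F q q' p p' κ w) :
    Good F q q' p p' (κ / (C * (1 + C)) ^ 3) z := by
  have h0 := L.c2
  have hp : 0 < C * (1 + C) := by linarith
  have h1 := L.mid h
  have h2 := L.near' h
  unfold Good at *
  rw [div_mul_eq_mul_div, div_le_iff₀ (by positivity)]
  calc κ * |Rm F q p z - z| ≤ κ * ((C * (1 + C)) ^ 2 * |Rm F q p w - w|) :=
        mul_le_mul_of_nonneg_left h1.2 hκ
    _ = (C * (1 + C)) ^ 2 * (κ * |Rm F q p w - w|) := by ring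
    _ ≤ (C * (1 + C)) ^ 2 * (C * (1 + C) * |Rm F q' p' z - z|) :=
        mul_le_mul_of_nonneg_left (hg.trans h2.2) (by positivity)
    _ = _ := by ring

theorem Lev.back0 (L : Lev F Φ A D C q q' p p') {κ w : ℝ} (hκ : 0 < κ) (hκ1 : κ ≤ 1) {j : ℕ}
    (hj : j ≤ q') (hg : Good F q q' p p' κ (F^[j] w)) :
    Good F q q' p p' (κ / (2 * (1 + C) * Real.exp (A * (3 * D)))) w :=
  B2E L.ana L.comb L.hC L.E hκ hκ1 w j hj hg

theorem Lev.tz (L : Lev F Φ A D C q q' p p') {κ w z : ℝ} (hκ : 0 < κ)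
    (h : Btwn w z (Rm F q' p' w)) (hg : Good F q q' p p' κ z) :
    Good F q q' p p' (κ / tauC A D C) w := by
  have hp : 0 < C * (1 + C) := by linarith [L.c2]
  refine (L.goodC hκ.le h hg).mono (div_le_div_of_nonneg_left hκ.le (by positivity) ?_)
  exact le_mul_of_one_le_right (by positivity) L.e0

theorem Lev.tz' (L : Lev F Φ A D C q q' p p') {κ w z : ℝ} (hκ : 0 < κ)
    (h : Btwn w z (Rm F q' p' w)) (hg : Good F q q' p p' κ w) :
    Good F q q' p p' (κ / tauC A D C) z := by
  have hp : 0 < C * (1 + C) := by linarith [L.c2]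
  refine (L.goodC' hκ.le h hg).mono (div_le_div_of_nonneg_left hκ.le (by positivity) ?_)
  exact le_mul_of_one_le_right (by positivity) L.e0

theorem Lev.back (L : Lev F Φ A D C q q' p p') {κ w : ℝ} (hκ : 0 < κ) (hκ1 : κ ≤ 1) {j : ℕ}
    (hj : j ≤ q') (hg : Good F q q' p p' κ (F^[j] w)) :
    Good F q q' p p' (κ / tauC A D C) w := by
  have h0 := L.e0
  refine (L.back0 hκ hκ1 hj hg).mono
    (div_le_div_of_nonneg_left hκ.le (lt_of_lt_of_le one_pos h0) ?_)
  exact le_mul_of_one_le_left (by linarith) (one_le_pow₀ L.c2)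

theorem btwn_right (a b : ℝ) : Btwn a b b := by
  unfold Btwn
  rcases le_total a b with h | h
  · exact Or.inl ⟨h, le_rfl⟩
  · exact Or.inr ⟨le_rfl, h⟩

theorem Lev.fwd (L : Lev F Φ A D C q q' p p') {κ w : ℝ} (hκ : 0 < κ) (hκ1 : κ ≤ 1) {j : ℕ}
    (hj : j ≤ q') (hg : Good F q q' p p' κ w) :
    Good F q q' p p' (κ / tauC A D C) (F^[j] w) := by
  have h1 := L.goodC' hκ.le (btwn_right w (Rm F q' p' w)) hg
  have hp : 1 ≤ (C * (1 + C)) ^ 3 := one_le_pow₀ L.c2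
  have h2 : F^[q' - j] (F^[j] w) = Rm F q' p' w + p' := by
    rw [← Function.iterate_add_apply, Nat.sub_add_cancel hj, Rm]; ring
  rw [← Good.int L p', ← h2] at h1
  have h3 := L.back0 (div_pos hκ (by linarith)) ((div_le_one (by linarith)).2 (hκ1.trans hp))
    (Nat.sub_le q' j) h1
  rwa [div_div] at h3

end

theorem crit_iter (f : MCM) (N : ℕ) (x : ℝ) (h : deriv (f.F^[N]) x = 0) :
    ∃ j < N, ∃ i, ∃ m : ℤ, f.F^[j] x = f.c i + m := by
  induction N with
  | zero => simp at h
  | succ N ih =>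
    have hd := mcm_diff f
    have hdN : Differentiable ℝ (f.F^[N]) := hd.iterate N
    rw [Function.iterate_succ', deriv_comp x (hd _) (hdN _)] at h
    rcases mul_eq_zero.1 h with h | h
    · obtain ⟨i, m, hm⟩ := f.critOnly _ h
      exact ⟨N, Nat.lt_succ_self N, i, m, hm⟩
    · obtain ⟨j, hj, hh⟩ := ih h
      exact ⟨j, by omega, hh⟩

/-! ### Final assembly -/

/-- two-sided comparability -/
def Cmp (X a b : ℝ) : Prop := a ≤ X * b ∧ b ≤ X * a

theorem Cmp.trans {X Y a b c : ℝ} (hX : 0 ≤ X) (hY : 0 ≤ Y) (h1 : Cmp X a b) (h2 : Cmp Y b c) :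
    Cmp (X * Y) a c := by
  constructor
  · rw [mul_assoc]; exact h1.1.trans (mul_le_mul_of_nonneg_left h2.1 hX)
  · rw [mul_comm X, mul_assoc]; exact h2.2.trans (mul_le_mul_of_nonneg_left h1.2 hY)

theorem Cmp.mono {X Y a b : ℝ} (ha : 0 ≤ a) (hb : 0 ≤ b) (hXY : X ≤ Y) (h : Cmp X a b) :
    Cmp Y a b :=
  ⟨h.1.trans (mul_le_mul_of_nonneg_right hXY hb), h.2.trans (mul_le_mul_of_nonneg_right hXY ha)⟩

section
variable {F Φ : ℝ → ℝ} {A D C : ℝ} {q q' : ℕ} {p p' : ℤ}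

theorem Lev.cmp_good (L : Lev F Φ A D C q q' p p') {κ w Y : ℝ} (hκ : 0 < κ)
    (hY : C * (1 + C) ≤ Y) (hYk : κ⁻¹ ≤ Y) (hg : Good F q q' p p' κ w) :
    Cmp Y |Rm F q' p' w - w| |Rm F q p w - w| := by
  constructor
  · exact (L.up w).trans (mul_le_mul_of_nonneg_right hY (abs_nonneg _))
  · have : |Rm F q p w - w| ≤ κ⁻¹ * |Rm F q' p' w - w| := by
      rw [inv_mul_eq_div, le_div_iff₀ hκ, mul_comm]; exact hg
    exact this.trans (mul_le_mul_of_nonneg_right hYk (abs_nonneg _))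

theorem Lev.cmp_shift (L : Lev F Φ A D C q q' p p') {w Y : ℝ} (hY : C * (1 + C) ≤ Y) :
    Cmp Y |Rm F q p w - w| |Rm F q p (Rm F q' p' w) - Rm F q' p' w| :=
  Cmp.mono (abs_nonneg _) (abs_nonneg _) hY (L.shift w)

theorem Lev.cmp_near (L : Lev F Φ A D C q q' p p') {w z Y : ℝ} (hY : C * (1 + C) ≤ Y)
    (h : Btwn w z (Rm F q p w)) :
    Cmp Y |Rm F q p w - w| |Rm F q p z - z| :=
  Cmp.mono (abs_nonneg _) (abs_nonneg _) hY ⟨(L.near h).2, (L.near h).1⟩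

end

theorem mcm_lev (f : MCM) (ρ : ℝ) (hirr : Irrational ρ) (hmem : ρ ∈ Set.Ioo (0 : ℝ) 1)
    (hrot : HasRotationNumber f.F ρ) :
    ∃ A C κ, 0 < κ ∧ κ ≤ 1 ∧
      (∀ n, Lev f.F (phiM f) A (2 * f.N + 1) C (qDen ρ n) (qDen ρ (n + 1)) (pNum ρ n)
        (pNum ρ (n + 1))) ∧
      ∀ n i, Good f.F (qDen ρ n) (qDen ρ (n + 1)) (pNum ρ n) (pNum ρ (n + 1)) κ (f.c i) := by
  obtain ⟨A, hA⟩ := mcm_ana f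
  obtain ⟨C, hC1, hC⟩ := B1E A (2 * f.N + 1)
  have hE : ∀ n, Esym (Rm f.F (qDen ρ n) (pNum ρ n)) C := fun n =>
    hC f.F (phiM f) _ _ _ _ hA (combE_mcm f ρ hirr hmem hrot n)
  have hL : ∀ n, Lev f.F (phiM f) A (2 * f.N + 1) C (qDen ρ n) (qDen ρ (n + 1)) (pNum ρ n)
      (pNum ρ (n + 1)) := fun n =>
    ⟨hA, combE_mcm f ρ hirr hmem hrot n, hC1, by positivity, hE n, hE (n + 1),
      (qDen_pos ρ hirr hmem n).2⟩
  have hk : ∀ i, ∃ κ, 0 < κ ∧ ∀ n, Good f.F (qDen ρ n) (qDen ρ (n + 1)) (pNum ρ n)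
      (pNum ρ (n + 1)) κ (f.c i) := by
    intro i
    obtain ⟨K, hK0, hK⟩ := mcm_powL f i
    obtain ⟨κ, hκ, h⟩ := B3E A (2 * f.N + 1) C K (f.s i) hC1 hK0 (f.s_gt_one i)
    exact ⟨κ, hκ, fun n => h f.F (phiM f) _ _ _ _ _ hA (combE_mcm f ρ hirr hmem hrot n)
      (hE n) (hE (n + 1)) hK⟩
  choose κ hκ0 hκ using hk
  have : Nonempty (Fin f.N) := ⟨⟨0, f.N_pos⟩⟩
  obtain ⟨i0, hi0⟩ := Finite.exists_min κ
  exact ⟨A, C, min 1 (κ i0), lt_min one_pos (hκ0 i0), min_le_left _ _, hL, fun n i =>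
    (hκ i n).mono ((min_le_right _ _).trans (hi0 i))⟩

theorem spot_good (f : MCM) (ρ : ℝ) {A C κ : ℝ} (hκ : 0 < κ) (hκ1 : κ ≤ 1) {n : ℕ}
    (L : Lev f.F (phiM f) A (2 * f.N + 1) C (qDen ρ n) (qDen ρ (n + 1)) (pNum ρ n)
        (pNum ρ (n + 1)))
    (hc : ∀ i, Good f.F (qDen ρ n) (qDen ρ (n + 1)) (pNum ρ n) (pNum ρ (n + 1)) κ (f.c i))
    (i₀ : Fin f.N) (i jj : ℕ) (hi : CritTime f ρ i₀ n i ∨ i = 0) (hjj : jj ≤ qDen ρ (n + 1)) :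
    Good f.F (qDen ρ n) (qDen ρ (n + 1)) (pNum ρ n) (pNum ρ (n + 1))
      (κ / tauC A (2 * f.N + 1) C / tauC A (2 * f.N + 1) C / tauC A (2 * f.N + 1) C)
      (f.F^[jj + qDen ρ n + i * qDen ρ (n + 1)] (f.c i₀)) := by
  set τ := tauC A (2 * f.N + 1) C with hτ
  have ht : 1 ≤ τ := L.tau
  have ht0 : 0 < τ := by linarith
  have hk1 : 0 < κ / τ := by positivity
  have hk1' : κ / τ ≤ 1 := (div_le_self hκ.le ht).trans hκ1
  have hk2 : 0 < κ / τ / τ := by positivity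
  have hk2' : κ / τ / τ ≤ 1 := (div_le_self hk1.le ht).trans hk1'
  rw [add_assoc, Function.iterate_add_apply]
  refine L.fwd hk2 hk2' hjj ?_
  rcases hi with ⟨_, x, hx, hd⟩ | hi
  · obtain ⟨j, hj, i', m, hm⟩ := crit_iter f _ x hd
    refine L.back hk1 hk1' hj.le ?_
    set w0 := f.F^[qDen ρ n + i * qDen ρ (n + 1)] (f.c i₀) with hw0
    have hg : Good f.F (qDen ρ n) (qDen ρ (n + 1)) (pNum ρ n) (pNum ρ (n + 1)) κ (f.F^[j] x) := by
      rw [hm, Good.int L]; exact hc i'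
    refine L.tz hκ ?_ hg
    have e2 : f.F^[qDen ρ n + i * qDen ρ (n + 1) + qDen ρ (n + 1)] (f.c i₀) -
        (pNum ρ (n + 1) : ℝ) = Rm f.F (qDen ρ (n + 1)) (pNum ρ (n + 1)) w0 := by
      rw [Rm, hw0, ← Function.iterate_add_apply, add_comm (qDen ρ (n + 1))]
      push_cast; rfl
    unfold atomSet at hx
    rw [e2, Set.mem_uIcc] at hx
    have hmj := (f.mono.iterate j).monotone
    rw [← iter_Rm f.deg1]
    rcases hx with hx | hx
    · exact Or.inl ⟨hmj hx.1, hmj hx.2⟩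
    · exact Or.inr ⟨hmj hx.1, hmj hx.2⟩
  · subst hi
    rw [Nat.zero_mul, add_zero]
    exact (L.fwd hκ hκ1 L.hqq (hc i₀)).mono (div_le_self hk1.le ht)

theorem pstar_cmp (f : MCM) (ρ : ℝ) (hirr : Irrational ρ) (hmem : ρ ∈ Set.Ioo (0 : ℝ) 1)
    (hrot : HasRotationNumber f.F ρ) (i₀ : Fin f.N) :
    ∃ X : ℝ, 1 ≤ X ∧ ∀ (n : ℕ) (e : ℝ × ℝ), PStarAtomEnds f ρ i₀ n e →
      ∀ z ∈ ({e.1, e.2} : Set ℝ),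
        Cmp X |e.2 - e.1| |Rm f.F (qDen ρ n) (pNum ρ n) z - z| := by
  obtain ⟨A, C, κ, hκ, hκ1, hL, hc⟩ := mcm_lev f ρ hirr hmem hrot
  set τ := tauC A (2 * f.N + 1) C with hτ
  have ht : 1 ≤ τ := (hL 0).tau
  have ht0 : 0 < τ := by linarith
  set κ3 := κ / τ / τ / τ with hκ3
  have hk1 : 0 < κ / τ := by positivity
  have hk2 : 0 < κ / τ / τ := by positivity
  have hk3 : 0 < κ3 := by positivity
  have hk13 : κ3 ≤ κ / τ := (div_le_self hk2.le ht).trans (div_le_self hk1.le ht)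
  have hk4 : 0 < κ3 / τ := by positivity
  have hc2 : 1 ≤ C * (1 + C) := (hL 0).c2
  have hinv : 0 < (κ3 / τ)⁻¹ := by positivity
  set Y := C * (1 + C) + (κ3 / τ)⁻¹ with hY
  have hY1 : C * (1 + C) ≤ Y := by linarith
  have hYk4 : (κ3 / τ)⁻¹ ≤ Y := by linarith
  have hYk3 : κ3⁻¹ ≤ Y := by
    refine le_trans ?_ hYk4
    exact (inv_le_inv₀ hk3 hk4).2 (div_le_self hk3.le ht)
  have hY0 : 1 ≤ Y := by linarith
  have hY00 : 0 ≤ Y := by linarith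
  have fin : ∀ (k : ℕ) (a b : ℝ), k ≤ 4 → 0 ≤ a → 0 ≤ b → Cmp (Y ^ k) a b → Cmp (Y ^ 4) a b :=
    fun k a b hk ha hb h => h.mono ha hb (pow_le_pow_right₀ hY0 hk)
  refine ⟨Y ^ 4, one_le_pow₀ hY0, ?_⟩
  intro n e he
  have L := hL n
  set R := Rm f.F (qDen ρ n) (pNum ρ n) with hR
  set R' := Rm f.F (qDen ρ (n + 1)) (pNum ρ (n + 1)) with hR'
  set R'' := Rm f.F (qDen ρ (n + 2)) (pNum ρ (n + 2)) with hR''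
  have hR2 : ∀ x, R'' x = R'^[cfDigit ρ (n + 1)] (R x) := by
    intro x
    rw [hR', Rm_iter f.deg1, hR, Rm, iter_sub_int f.deg1, ← Function.iterate_add_apply, hR'', Rm]
    rw [show qDen ρ (n + 2) = cfDigit ρ (n + 1) * qDen ρ (n + 1) + qDen ρ n from rfl,
      show pNum ρ (n + 2) = cfDigit ρ (n + 1) * pNum ρ (n + 1) + pNum ρ n from rfl]
    push_cast; ring
  have hsg := signs_mcm f ρ hirr hmem hrot n
  -- atoms of the form `(w, R' w)` with `w` good
  have spot : ∀ w, Good f.F (qDen ρ n) (qDen ρ (n + 1)) (pNum ρ n) (pNum ρ (n + 1)) κ3 w →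
      ∀ z ∈ ({w, R' w} : Set ℝ), Cmp (Y ^ 4) |R' w - w| |R z - z| := by
    intro w hw z hz
    have h1 := L.cmp_good hk3 hY1 hYk3 hw
    rcases hz with rfl | rfl
    · exact fin 1 _ _ (by norm_num) (abs_nonneg _) (abs_nonneg _) (by rw [pow_one]; exact h1)
    · refine fin 2 _ _ (by norm_num) (abs_nonneg _) (abs_nonneg _) ?_
      rw [sq]
      exact h1.trans hY00 hY00 (L.cmp_shift hY1)
  rcases he with ⟨i, jj, hi, hjj, rfl⟩ | ⟨i, j, jj, hb, hij, hjj, rfl⟩ | ⟨jj, hjj, rfl⟩ |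
    ⟨l, hl, rfl⟩
  · have hg := spot_good f ρ hκ hκ1 L (hc n) i₀ i jj hi hjj.le
    have := spot _ hg
    have e2 : R' (f.F^[jj + qDen ρ n + i * qDen ρ (n + 1)] (f.c i₀)) =
        f.F^[jj + qDen ρ n + (i + 1) * qDen ρ (n + 1)] (f.c i₀) - (pNum ρ (n + 1) : ℝ) := by
      rw [hR', Rm, ← Function.iterate_add_apply,
        show qDen ρ (n + 1) + (jj + qDen ρ n + i * qDen ρ (n + 1)) =
          jj + qDen ρ n + (i + 1) * qDen ρ (n + 1) by ring]
      push_cast; rfl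
    rw [e2] at this
    exact this
  · -- bridges
    obtain ⟨hi, hlt, _, hj⟩ := hb
    have hja : j ≤ cfDigit ρ (n + 1) := by
      rcases hj with hj | hj
      · exact hj.1.le
      · exact hj.le
    have hg := spot_good f ρ hκ hκ1 L (hc n) i₀ i jj hi hjj.le
    set v := f.F^[jj] (f.c i₀) with hv
    have hx : ∀ k, f.F^[jj + qDen ρ n + k * qDen ρ (n + 1)] (f.c i₀) =
        R'^[k] (R v) + ((pNum ρ n + k * pNum ρ (n + 1) : ℤ) : ℝ) := by
      intro k
      rw [hR', Rm_iter f.deg1, hR, Rm, iter_sub_int f.deg1, ← Function.iterate_add_apply, hv,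
        ← Function.iterate_add_apply,
        show k * qDen ρ (n + 1) + qDen ρ n + jj = jj + qDen ρ n + k * qDen ρ (n + 1) by ring]
      push_cast; ring
    rw [hx, Good.int L] at hg
    have hg1 := L.tz' hk3 (btwn_right _ _) hg
    have e1 : Rm f.F (qDen ρ (n + 1)) (pNum ρ (n + 1)) (R'^[i] (R v)) = R'^[i + 1] (R v) := by
      rw [Function.iterate_succ_apply']
    rw [e1] at hg1
    obtain ⟨o1, o2, o3, o4⟩ := ordered hsg hR2 v (k := i + 1) (l := j) (by omega) hja
    set M : ℤ := pNum ρ n + (i + 1 : ℕ) * pNum ρ (n + 1) with hM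
    have E1 : f.F^[jj + qDen ρ n + (i + 1) * qDen ρ (n + 1)] (f.c i₀) =
        R'^[i + 1] (R v) + (M : ℝ) := hx (i + 1)
    have E2 : f.F^[jj + qDen ρ n + j * qDen ρ (n + 1)] (f.c i₀) -
        (((j - 1 - i) * pNum ρ (n + 1) : ℕ) : ℝ) = R'^[j] (R v) + (M : ℝ) := by
      rw [hx j, hM]
      obtain ⟨d, rfl⟩ : ∃ d, j = i + 1 + d := ⟨j - (i + 1), by omega⟩
      rw [show i + 1 + d - 1 - i = d by omega]
      push_cast; ring
    rw [E1, E2]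
    intro z hz
    simp only [add_sub_add_right_eq_sub]
    have h0 : Cmp Y |R'^[i + 2] (R v) - R'^[i + 1] (R v)|
        |R (R'^[i + 1] (R v)) - R'^[i + 1] (R v)| := by
      have := L.cmp_good hk4 hY1 hYk4 hg1
      rw [show R'^[i + 2] (R v) = R' (R'^[i + 1] (R v)) by
        rw [Function.iterate_succ_apply']]
      exact this
    have h1 : Cmp Y |R v - v| |R (R'^[i + 1] (R v)) - R'^[i + 1] (R v)| := L.cmp_near hY1 o1
    have h2 : Cmp Y |R v - v| |R (R'^[j] (R v)) - R'^[j] (R v)| := L.cmp_near hY1 o2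
    have h3 : Cmp (Y * Y) |R'^[j] (R v) - R'^[i + 1] (R v)| |R v - v| := by
      constructor
      · exact o4.trans (le_mul_of_one_le_left (abs_nonneg _) (by nlinarith))
      · rw [mul_assoc]
        refine h1.1.trans (mul_le_mul_of_nonneg_left ?_ hY00)
        exact h0.2.trans (mul_le_mul_of_nonneg_left o3 hY00)
    have hz' : ∃ y, Cmp Y |R v - v| |R y - y| ∧ |R z - z| = |R y - y| := by
      rcases hz with hz | hz
      · refine ⟨_, h1, ?_⟩
        rw [hz]; exact Rm_len_int f.deg1 _ _ _ _
      · refine ⟨_, h2, ?_⟩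
        rw [Set.mem_singleton_iff.1 hz]; exact Rm_len_int f.deg1 _ _ _ _
    obtain ⟨y, hy1, hy2⟩ := hz'
    rw [hy2]
    refine fin 3 _ _ (by norm_num) (abs_nonneg _) (abs_nonneg _) ?_
    have := h3.trans (by positivity) hY00 hy1
    rw [show Y ^ 3 = Y * Y * Y by ring]
    exact this
  · -- the intervals `I_{n+2}`
    set w := f.F^[jj] (f.c i₀) with hw
    have g1 : Good f.F (qDen ρ n) (qDen ρ (n + 1)) (pNum ρ n) (pNum ρ (n + 1)) κ3 w :=
      (L.fwd hκ hκ1 hjj.le (hc n i₀)).mono hk13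
    have g2 : Good f.F (qDen ρ (n + 1)) (qDen ρ (n + 2)) (pNum ρ (n + 1)) (pNum ρ (n + 2)) κ3 w :=
      ((hL (n + 1)).fwd hκ hκ1 (hjj.le.trans (hL (n + 1)).hqq) (hc (n + 1) i₀)).mono hk13
    have e2 : f.F^[jj + qDen ρ (n + 2)] (f.c i₀) - (pNum ρ (n + 2) : ℝ) = R'' w := by
      rw [hR'', Rm, hw, ← Function.iterate_add_apply, add_comm jj]
      push_cast; rfl
    rw [e2]
    have h1 := L.cmp_good hk3 hY1 hYk3 g1
    have h2 := (hL (n + 1)).cmp_good hk3 hY1 hYk3 g2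
    have h3 : Cmp (Y * Y) |R'' w - w| |R w - w| := h2.trans hY00 hY00 h1
    have ha : 1 ≤ cfDigit ρ (n + 1) := (gauss_digit ρ hirr hmem (n + 1)).2
    obtain ⟨-, o2, -, -⟩ := ordered hsg hR2 w (k := 0) (l := cfDigit ρ (n + 1)) (by omega) le_rfl
    rw [← hR2] at o2
    have h4 : Cmp Y |R w - w| |R (R'' w) - R'' w| := L.cmp_near hY1 o2
    intro z hz
    rcases hz with hz | hz
    · rw [hz]
      refine fin 2 _ _ (by norm_num) (abs_nonneg _) (abs_nonneg _) ?_
      rw [sq]; exact h3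
    · rw [Set.mem_singleton_iff.1 hz]
      refine fin 3 _ _ (by norm_num) (abs_nonneg _) (abs_nonneg _) ?_
      rw [show Y ^ 3 = Y * Y * Y by ring]
      exact h3.trans (by positivity) hY00 h4
  · have g1 : Good f.F (qDen ρ n) (qDen ρ (n + 1)) (pNum ρ n) (pNum ρ (n + 1)) κ3
        (f.F^[l] (f.c i₀)) :=
      (L.fwd hκ hκ1 (hl.le.trans L.hqq) (hc n i₀)).mono hk13
    have := spot _ g1
    have e2 : R' (f.F^[l] (f.c i₀)) =
        f.F^[l + qDen ρ (n + 1)] (f.c i₀) - (pNum ρ (n + 1) : ℝ) := by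
      rw [hR', Rm, ← Function.iterate_add_apply, add_comm l]
      push_cast; rfl
    rw [e2] at this
    exact this

/-- **Proposition: consecutive atoms of `P*_n(c₀)` are comparable.**
There is `K > 1` depending only on `f` such that any two atoms of the auxiliary
partition `P*_n(c₀)` which share an endpoint on the circle have comparable lengths. -/
theorem consecutive_pstar_atoms_comparable
    (f : MCM) (ρ : ℝ) (hirr : Irrational ρ) (hmem : ρ ∈ Set.Ioo (0 : ℝ) 1)
    (hrot : HasRotationNumber f.F ρ) (i₀ : Fin f.N) :
    ∃ K : ℝ, 1 < K ∧ ∀ (n : ℕ) (e e' : ℝ × ℝ),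
      PStarAtomEnds f ρ i₀ n e → PStarAtomEnds f ρ i₀ n e' →
      (∃ u ∈ ({e.1, e.2} : Set ℝ), ∃ u' ∈ ({e'.1, e'.2} : Set ℝ),
        ∃ k : ℤ, u' = u + (k : ℝ)) →
      K⁻¹ * |e'.2 - e'.1| ≤ |e.2 - e.1| ∧ |e.2 - e.1| ≤ K * |e'.2 - e'.1| := by
  obtain ⟨X, hX1, hX⟩ := pstar_cmp f ρ hirr hmem hrot i₀
  refine ⟨X * X + 1, by nlinarith, ?_⟩
  rintro n e e' he he' ⟨u, hu, u', hu', k, hk⟩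
  have h1 := hX n e he u hu
  have h2 := hX n e' he' u' hu'
  rw [hk, Rm_len_int f.deg1] at h2
  have hX0 : 0 ≤ X := by linarith
  have h3 := h1.trans hX0 hX0 ⟨h2.2, h2.1⟩
  have hp : 0 < X * X + 1 := by positivity
  constructor
  · rw [inv_mul_eq_div, div_le_iff₀ hp, mul_comm]
    exact h3.2.trans (mul_le_mul_of_nonneg_right (by linarith) (abs_nonneg _))
  · exact h3.1.trans (mul_le_mul_of_nonneg_right (by linarith) (abs_nonneg _))
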